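/- arXiv:1705.09707 — 3 statements merged into one kernel-verified Lean document; each statement's English description precedes it below -/
import Mathlib

section
/- Let X be a standard Borel space equipped with a Borel probability measure μ, let Y be a standard Borel space, and let A ⊆ X × Y be an analytic set such that for every x ∈ X the fiber {y ∈ Y : (x, y) ∈ A} is uncountable. Then there exists a Borel set Ā ⊆ A such that for μ-almost-every x ∈ X the fiber {y ∈ Y : (x, y) ∈ Ā} is uncountable. -/
open MeasureTheory Set Function
open scoped ENNReal symmDiff

/-- A set in a measurable space is *analytic* if it is the image of a Borel subset of a
standard Borel space under a Borel (measurable) map. -/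
def IsAnalyticS {W : Type*} [MeasurableSpace W] (A : Set W) : Prop :=
  ∃ (Z : Type) (mZ : MeasurableSpace Z), @StandardBorelSpace Z mZ ∧
    ∃ (B : Set Z) (f : Z → W), MeasurableSet[mZ] B ∧ @Measurable Z W mZ _ f ∧ f '' B = A

/-- The smallest `G`-invariant sub-σ-algebra containing the collection `ξ`. -/
def sigmaG (G : Type*) {X : Type*} [Group G] [MulAction G X] (ξ : Set (Set X)) :
    MeasurableSpace X :=
  MeasurableSpace.generateFrom {B | ∃ (g : G), ∃ A ∈ ξ, B = (fun x => g • x) ⁻¹' A}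

/-- The σ-algebra of `G`-invariant measurable sets. -/
def invSigma (G X : Type*) [Group G] [MulAction G X] [MeasurableSpace X] :
    MeasurableSpace X :=
  MeasurableSpace.generateFrom {A | MeasurableSet A ∧ ∀ g : G, (fun x => g • x) ⁻¹' A = A}

/-- Conditional Shannon entropy `H_μ(α | m)` of a countable partition `α` given a
sub-σ-algebra `m`, valued in `[0,∞]`. -/
noncomputable def condEnt {X : Type*} (m : MeasurableSpace X) [mX : MeasurableSpace X]
    (μ : Measure X) {ι : Type*} (α : ι → Set X) : ℝ≥0∞ :=
  ∫⁻ x, ∑' i, ENNReal.ofReal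
    (Real.negMulLog ((μ[(α i).indicator (fun _ => (1 : ℝ)) | m]) x)) ∂μ

/-- Shannon entropy `H_μ(α)` of a countable partition. -/
noncomputable def shEnt {X : Type*} [MeasurableSpace X] (μ : Measure X)
    {ι : Type*} (α : ι → Set X) : ℝ≥0∞ :=
  ∑' i, ENNReal.ofReal (Real.negMulLog (μ (α i)).toReal)

/-- `α` is a countable Borel partition of `X` (indexed by `ℕ`, cells may be empty). -/
def IsPartition {X : Type*} [MeasurableSpace X] (α : ℕ → Set X) : Prop :=
  (∀ i, MeasurableSet (α i)) ∧ Pairwise (Function.onFun Disjoint α) ∧ (⋃ i, α i) = univ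

/-- Every set of `ξ` agrees with an `m`-measurable set modulo `μ`-null sets. -/
def SubsetMod {X : Type*} (m : MeasurableSpace X) [mX : MeasurableSpace X] (μ : Measure X)
    (ξ : Set (Set X)) : Prop :=
  ∀ A ∈ ξ, ∃ B, MeasurableSet[m] B ∧ μ (A ∆ B) = 0

/-- Outer Rokhlin entropy `rh_{G,μ}(ξ | F)`. -/
noncomputable def outerRokhlin (G : Type*) {X : Type*} (ξ : Set (Set X))
    (F : MeasurableSpace X) [Group G] [MulAction G X] [mX : MeasurableSpace X]
    (μ : Measure X) : ℝ≥0∞ :=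
  sInf { h | ∃ α : ℕ → Set X, IsPartition α ∧
      SubsetMod (sigmaG G (Set.range α) ⊔ F ⊔ invSigma G X) μ ξ ∧
      h = condEnt (F ⊔ invSigma G X) μ α }

/-- Rokhlin entropy `rh_G(X, μ | F)`. -/
noncomputable def rokhlin (G : Type*) {X : Type*} (F : MeasurableSpace X) [Group G]
    [MulAction G X] [mX : MeasurableSpace X] (μ : Measure X) : ℝ≥0∞ :=
  outerRokhlin G {A | MeasurableSet A} F μ

/-- Outer Rokhlin entropy `rh_{G,μ}(S | F)` of a sub-σ-algebra `S`. -/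
noncomputable def outerRokhlinAlg (G : Type*) {X : Type*} (S F : MeasurableSpace X) [Group G]
    [MulAction G X] [mX : MeasurableSpace X] (μ : Measure X) : ℝ≥0∞ :=
  outerRokhlin G {A | MeasurableSet[S] A} F μ

/-- The action of `G` on `(X, μ)` is probability-measure-preserving. -/
def IsPmp (G : Type*) {X : Type*} [Group G] [MulAction G X] [MeasurableSpace X]
    (μ : Measure X) : Prop :=
  ∀ g : G, MeasurePreserving (fun x => g • x) μ μ

/-- Aperiodicity: μ-almost-every `G`-orbit is infinite. -/
def Aperiodic (G : Type*) {X : Type*} [Group G] [MulAction G X] [MeasurableSpace X]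
    (μ : Measure X) : Prop :=
  ∀ᵐ x ∂μ, (MulAction.orbit G x).Infinite

/-- Ergodicity of a measure: every invariant Borel set is null or conull. -/
def IsErgodicInv (G : Type*) {X : Type*} [Group G] [MulAction G X] [MeasurableSpace X]
    (ν : Measure X) : Prop :=
  ∀ A : Set X, MeasurableSet A → (∀ g : G, (fun x => g • x) ⁻¹' A = A) → ν A = 0 ∨ ν A = 1

/-- `F` is a `G`-invariant σ-algebra. -/
def InvariantAlg (G : Type*) {X : Type*} (F : MeasurableSpace X) [Group G] [MulAction G X] :
    Prop :=
  ∀ (g : G) (A : Set X), MeasurableSet[F] A → MeasurableSet[F] ((fun x => g • x) ⁻¹' A)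

/-- `F` is countably generated. -/
def CountablyGen {X : Type*} (F : MeasurableSpace X) : Prop :=
  ∃ S : Set (Set X), S.Countable ∧ F = MeasurableSpace.generateFrom S

/-- `π` is an ergodic decomposition map for `μ`. -/
def IsErgDecomp (G : Type*) {X : Type*} [Group G] [MulAction G X] [MeasurableSpace X]
    (μ : Measure X) (π : X → Measure X) : Prop :=
  Measurable π ∧
  (∀ x, IsProbabilityMeasure (π x) ∧ IsPmp G (π x) ∧ IsErgodicInv G (π x)) ∧
  (∀ (g : G) (x : X), π (g • x) = π x) ∧
  (∀ ν : Measure X, IsProbabilityMeasure ν → IsPmp G ν → IsErgodicInv G ν →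
      ν {x | π x = ν} = 1) ∧
  (∀ B : Set X, MeasurableSet B → μ B = ∫⁻ x, π x B ∂μ)

/-!
Write `A` as the range of a continuous map `(p, q)` on a Polish space `α`. The continuous maps
`g` from the Cantor space to `α` that stay in one fiber of `p` and for which `q ∘ g` is injective
form a Borel subset `G` of the Polish space `C(ℕ → Bool, α)`. By the perfect set theorem applied to
`q` on the fibers of `p`, the section of `A` at `x` is uncountable exactly when `x` is the value of
`p` along some `g ∈ G`. Analytic sets are capacitable, so a σ-compact `L ⊆ G` already realizes
almost all these `x`. The union over `g ∈ L` of the images of `g` under `(p, q)` is then a σ-compact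
subset of `A` with the required sections.
-/

section PerfectSet

open Filter Topology CantorScheme

variable {α β : Type*}

/-- The condensation points of `C` relative to `q`: the points of `C` all of whose neighbourhoods
in `C` have uncountable image under `q`. -/
def imageCondensation [TopologicalSpace α] (q : α → β) (C : Set α) : Set α :=
  {a ∈ C | ∀ U ∈ 𝓝[C] a, ¬ (q '' U).Countable}

theorem countable_image_diff_imageCondensation [TopologicalSpace α] [SecondCountableTopology α]
    (q : α → β) (C : Set α) : (q '' (C \ imageCondensation q C)).Countable := by
  refine (HereditarilyLindelofSpace.isLindelof (C \ imageCondensation q C)).induction_on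
    (p := fun s => (q '' s).Countable) (fun s t hst ht => ht.mono (image_mono hst))
    (fun S hS hSq => ?_) fun a ⟨haC, ha⟩ => ?_
  · rw [sUnion_eq_biUnion, image_iUnion₂]
    exact hS.biUnion hSq
  · obtain ⟨U, hU, hUq⟩ : ∃ U ∈ 𝓝[C] a, (q '' U).Countable := by
      simpa [imageCondensation, haC] using ha
    exact ⟨U, nhdsWithin_mono a sdiff_subset hU, hUq⟩

theorem nontrivial_image_imageCondensation [TopologicalSpace α] [SecondCountableTopology α]
    {q : α → β} {C : Set α} (hqC : ¬ (q '' C).Countable) :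
    (q '' imageCondensation q C).Nontrivial := by
  by_contra htriv
  refine hqC (((countable_image_diff_imageCondensation q C).union
    (not_nontrivial_iff.1 htriv).countable).mono ?_)
  rw [← image_union]
  exact image_mono fun a ha => by simp [ha]

theorem exists_isClosed_subset_of_mem_imageCondensation [TopologicalSpace α] [RegularSpace α]
    {q : α → β} {C U : Set α} (hC : IsClosed C) {a : α} (ha : a ∈ imageCondensation q C)
    (hU : U ∈ 𝓝 a) : ∃ D ⊆ C ∩ U, IsClosed D ∧ ¬ (q '' D).Countable := by
  obtain ⟨V, hV, hVclosed, hVU⟩ := exists_mem_nhds_isClosed_subset hU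
  exact ⟨C ∩ V, inter_subset_inter_right C hVU, hC.inter hVclosed,
    ha.2 _ (inter_mem self_mem_nhdsWithin (mem_nhdsWithin_of_mem_nhds hV))⟩

theorem exists_splitting_of_not_countable_image [PseudoMetricSpace α] [SecondCountableTopology α]
    [TopologicalSpace β] [T2Space β] {q : α → β} (hq : Continuous q) {C : Set α} (hC : IsClosed C)
    (hqC : ¬ (q '' C).Countable) {ε : ℝ≥0∞} (hε : ε ≠ 0) :
    ∃ D : Bool → Set α, (∀ i, IsClosed (D i) ∧ ¬ (q '' D i).Countable) ∧
      (∀ i, D i ⊆ C ∧ Metric.ediam (D i) ≤ ε) ∧ Pairwise (Disjoint on fun i => q '' D i) := by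
  obtain ⟨_, ⟨a, ha, rfl⟩, _, ⟨b, hb, rfl⟩, hab⟩ := nontrivial_image_imageCondensation hqC
  obtain ⟨U, V, hU, hV, haU, hbV, hUV⟩ := t2_separation hab
  have shrink : ∀ c ∈ imageCondensation q C, ∀ W, IsOpen W → q c ∈ W →
      ∃ D, (IsClosed D ∧ ¬ (q '' D).Countable) ∧ (D ⊆ C ∧ Metric.ediam D ≤ ε) ∧ q '' D ⊆ W := by
    intro c hc W hW hcW
    obtain ⟨D, hD, hDclosed⟩ := exists_isClosed_subset_of_mem_imageCondensation hC hc
      (inter_mem ((hW.preimage hq).mem_nhds hcW)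
        (Metric.eball_mem_nhds c (ENNReal.half_pos hε)))
    obtain ⟨hDC, hDW, hDball⟩ : D ⊆ C ∧ D ⊆ q ⁻¹' W ∧ D ⊆ Metric.eball c (ε / 2) := by
      simpa only [subset_inter_iff] using hD
    refine ⟨D, hDclosed, ⟨hDC, ?_⟩, image_subset_iff.2 hDW⟩
    calc Metric.ediam D ≤ Metric.ediam (Metric.eball c (ε / 2)) := Metric.ediam_mono hDball
      _ ≤ 2 * (ε / 2) := Metric.ediam_eball_le
      _ = ε := ENNReal.mul_div_cancel two_ne_zero ENNReal.ofNat_ne_top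
  obtain ⟨D₀, hD₀, hD₀C, hD₀U⟩ := shrink a ha U hU haU
  obtain ⟨D₁, hD₁, hD₁C, hD₁V⟩ := shrink b hb V hV hbV
  refine ⟨fun i => cond i D₁ D₀, Bool.forall_bool.2 ⟨hD₀, hD₁⟩, Bool.forall_bool.2 ⟨hD₀C, hD₁C⟩, ?_⟩
  have hdisj : Disjoint (q '' D₀) (q '' D₁) := hUV.mono hD₀U hD₁V
  simpa only [Bool.apply_cond] using pairwise_disjoint_on_bool.2 hdisj.symm

theorem exists_cantorScheme_of_not_countable_image [PseudoMetricSpace α]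
    [SecondCountableTopology α] [TopologicalSpace β] [T2Space β] {q : α → β} (hq : Continuous q)
    {C : Set α} (hC : IsClosed C) (hqC : ¬ (q '' C).Countable) :
    ∃ D : List Bool → Set α, D [] = C ∧ (∀ l, (D l).Nonempty) ∧ ClosureAntitone D ∧
      VanishingDiam D ∧ CantorScheme.Disjoint fun l => q '' D l := by
  let P := {E : Set α // IsClosed E ∧ ¬ (q '' E).Countable}
  choose split hsplit_mem hsplit_sub hsplit_disj using fun (E : P) (n : ℕ) =>
    exists_splitting_of_not_countable_image hq E.2.1 E.2.2
      (ENNReal.inv_ne_zero.2 (ENNReal.natCast_ne_top n))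
  let D : List Bool → P := fun l =>
    List.rec ⟨C, hC, hqC⟩ (fun i l E => ⟨split E l.length i, hsplit_mem E l.length i⟩) l
  refine ⟨fun l => (D l).1, rfl, fun l => ?_, ?_, fun x => ?_, fun l => hsplit_disj (D l) l.length⟩
  · by_contra hempty
    refine (D l).2.2 ?_
    have hDl : (D l).1 = ∅ := not_nonempty_iff_eq_empty.1 hempty
    simp only [hDl, image_empty, countable_empty]
  · exact Antitone.closureAntitone (fun l i => (hsplit_sub (D l) l.length i).1) fun l => (D l).2.1
  · rw [← tendsto_add_atTop_iff_nat 1]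
    refine tendsto_of_tendsto_of_tendsto_of_le_of_le tendsto_const_nhds
      ENNReal.tendsto_inv_nat_nhds_zero (fun n => zero_le) fun n => ?_
    calc Metric.ediam (D (x n :: PiNat.res x n)).1 ≤ ((PiNat.res x n).length : ℝ≥0∞)⁻¹ :=
          (hsplit_sub (D (PiNat.res x n)) _ (x n)).2
      _ = (n : ℝ≥0∞)⁻¹ := by rw [PiNat.res_length]

theorem exists_continuous_forall_mem_cantorScheme [PseudoMetricSpace α] [CompleteSpace α]
    [TopologicalSpace β] [DiscreteTopology β] {D : List β → Set α} (hanti : ClosureAntitone D)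
    (hdiam : VanishingDiam D) (hne : ∀ l, (D l).Nonempty) :
    ∃ f : (ℕ → β) → α, Continuous f ∧ ∀ x n, f x ∈ D (PiNat.res x n) := by
  have hdom : ∀ x, x ∈ (inducedMap D).1 :=
    eq_univ_iff_forall.1 (hanti.map_of_vanishingDiam hdiam hne)
  exact ⟨fun x => (inducedMap D).2 ⟨x, hdom x⟩,
    hdiam.map_continuous.comp (continuous_id.subtype_mk hdom), fun x n => map_mem ⟨x, hdom x⟩ n⟩

theorem injective_of_forall_mem_cantorScheme {D : List β → Set α} (hD : CantorScheme.Disjoint D)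
    {f : (ℕ → β) → α} (hf : ∀ x n, f x ∈ D (PiNat.res x n)) : Injective f := by
  intro x y hxy
  refine PiNat.res_injective (funext fun n => ?_)
  induction n with
  | zero => rfl
  | succ n ih =>
    have hx : f x ∈ D (x n :: PiNat.res x n) := hf x (n + 1)
    have hy : f x ∈ D (y n :: PiNat.res x n) := by
      rw [hxy, ih]
      exact hf y (n + 1)
    have hxyn : x n = y n := by
      by_contra hne
      exact disjoint_left.1 (hD _ hne) hx hy
    rw [PiNat.res_succ, PiNat.res_succ, hxyn, ih]

theorem exists_continuous_injective_comp_of_not_countable_image [TopologicalSpace α]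
    [PolishSpace α] [TopologicalSpace β] [T2Space β] {q : α → β} (hq : Continuous q) {C : Set α}
    (hC : IsClosed C) (hqC : ¬ (q '' C).Countable) :
    ∃ f : (ℕ → Bool) → α, Continuous f ∧ (∀ x, f x ∈ C) ∧ Injective (q ∘ f) := by
  let := TopologicalSpace.upgradeIsCompletelyMetrizable α
  obtain ⟨D, rfl, hne, hanti, hdiam, hdisj⟩ := exists_cantorScheme_of_not_countable_image hq hC hqC
  obtain ⟨f, hf, hfD⟩ := exists_continuous_forall_mem_cantorScheme hanti hdiam hne
  exact ⟨f, hf, fun x => hfD x 0,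
    injective_of_forall_mem_cantorScheme hdisj fun x n => mem_image_of_mem q (hfD x n)⟩

end PerfectSet

section FiberEmbeddings

variable {K α X Y : Type*} [TopologicalSpace K] [TopologicalSpace α]

/-- The continuous maps `K → α` that stay in a single fiber of `p` and are injective after
composition with `q`. -/
def fiberEmbeddings (K : Type*) [TopologicalSpace K] (p : α → X) (q : α → Y) : Set C(K, α) :=
  {g | (∀ a b, p (g a) = p (g b)) ∧ Injective (q ∘ g)}

theorem isGδ_injective_continuousMap [CompactSpace K] [TopologicalSpace.MetrizableSpace K]
    [TopologicalSpace Y] [T2Space Y] : IsGδ {h : C(K, Y) | Injective h} := by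
  let := TopologicalSpace.metrizableSpaceMetric K
  obtain ⟨T, hTclosed, -, hT, -⟩ :=
    (isClosed_diagonal (X := K)).isOpen_compl.exists_iUnion_isClosed
  have hinj : {h : C(K, Y) | Injective h} =
      ⋂ n, {h | MapsTo (h.prodMap h) (T n) (diagonal Y)ᶜ} := by
    ext h
    simp only [mem_iInter, mem_ofPred_eq, ← mapsTo_iUnion, hT]
    exact ⟨fun hh ab hne heq => hne (hh heq),
      fun hh a b heq => by_contra fun hne => hh (show (a, b) ∈ (diagonal K)ᶜ from hne) heq⟩
  rw [hinj]
  refine .iInter_of_isOpen fun n => ?_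
  have hsq : Continuous fun h : C(K, Y) => h.prodMap h := by
    refine ContinuousMap.continuous_of_continuous_uncurry _ ?_
    change Continuous fun z : C(K, Y) × K × K => (z.1 z.2.1, z.1 z.2.2)
    fun_prop
  exact (ContinuousMap.isOpen_setOfPred_mapsTo (hTclosed n).isCompact
    isClosed_diagonal.isOpen_compl).preimage hsq

theorem analyticSet_fiberEmbeddings [CompactSpace K] [TopologicalSpace.MetrizableSpace K]
    [PolishSpace α] [TopologicalSpace X] [T2Space X] [TopologicalSpace Y] [T2Space Y]
    {p : α → X} {q : α → Y} (hp : Continuous p) (hq : Continuous q) :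
    AnalyticSet (fiberEmbeddings K p q) := by
  let := TopologicalSpace.upgradeIsCompletelyMetrizable α
  let := TopologicalSpace.metrizableSpaceMetric K
  borelize C(K, α)
  have hfiber : IsClosed {g : C(K, α) | ∀ a b, p (g a) = p (g b)} := by
    simp only [ofPred_forall]
    exact isClosed_iInter fun a => isClosed_iInter fun b => isClosed_eq (by fun_prop) (by fun_prop)
  have hinj : IsGδ {g : C(K, α) | Injective (q ∘ g)} :=
    isGδ_injective_continuousMap.preimage (ContinuousMap.continuous_postcomp ⟨q, hq⟩)
  exact (hfiber.measurableSet.inter hinj.measurableSet).analyticSet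

theorem exists_mem_fiberEmbeddings [PolishSpace α] [TopologicalSpace X] [T1Space X]
    [TopologicalSpace Y] [T2Space Y] {p : α → X} {q : α → Y} (hp : Continuous p)
    (hq : Continuous q) {x : X} (hx : ¬ (q '' (p ⁻¹' {x})).Countable) :
    ∃ g ∈ fiberEmbeddings (ℕ → Bool) p q, ∀ a, p (g a) = x := by
  obtain ⟨g, hg, hgx, hginj⟩ := exists_continuous_injective_comp_of_not_countable_image hq
    (isClosed_singleton.preimage hp) hx
  exact ⟨⟨g, hg⟩, ⟨fun a b => (hgx a).trans (hgx b).symm, hginj⟩, hgx⟩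

theorem not_countable_section_of_mem_fiberEmbeddings [Uncountable K] {p : α → X} {q : α → Y}
    {g : C(K, α)} (hg : g ∈ fiberEmbeddings K p q) {B : Set (X × Y)}
    (hB : ∀ a, (p (g a), q (g a)) ∈ B) (a : K) : ¬ {y | (p (g a), y) ∈ B}.Countable := by
  intro hcount
  have hmaps : MapsTo (q ∘ g) univ {y | (p (g a), y) ∈ B} := fun b _ => by
    rw [mem_ofPred_eq, hg.1 a b]
    exact hB b
  exact not_countable_univ (hmaps.countable_of_injOn hg.2.injOn hcount)

instance uncountable_fun {ι β : Type*} [Infinite ι] [Nontrivial β] : Uncountable (ι → β) := by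
  refine Cardinal.aleph0_lt_mk_iff.1 ?_
  calc Cardinal.aleph0 ≤ Cardinal.lift (Cardinal.mk ι) :=
        Cardinal.aleph0_le_lift.2 (Cardinal.aleph0_le_mk ι)
    _ < 2 ^ Cardinal.lift (Cardinal.mk ι) := Cardinal.cantor _
    _ ≤ Cardinal.lift (Cardinal.mk β) ^ Cardinal.lift (Cardinal.mk ι) :=
        Cardinal.power_le_power_right <| Cardinal.ofNat_le_lift_iff.2 <|
          Cardinal.two_le_iff.2 (exists_pair_ne β)
    _ = Cardinal.mk (ι → β) := (Cardinal.mk_arrow ι β).symm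

end FiberEmbeddings

section Capacity

open Filter Topology

variable {α X : Type*}

theorem isCompact_Iic_nat (b : ℕ → ℕ) : IsCompact (Iic b) := by
  rw [← Icc_bot]
  exact isCompact_Icc

/-- The points of the Baire space whose first `k` coordinates are bounded by those of `b`. These
clopen sets decrease with `k` to the compact set `Iic b`. -/
def initialBox (b : ℕ → ℕ) (k : ℕ) : Set (ℕ → ℕ) :=
  {z | ∀ i < k, z i ≤ b i}

theorem antitone_initialBox (b : ℕ → ℕ) : Antitone (initialBox b) :=
  fun _ _ hkn _ hz i hi => hz i (hi.trans_le hkn)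

theorem exists_initialBox_subset {b : ℕ → ℕ} {U : Set (ℕ → ℕ)} (hU : IsOpen U)
    (hbU : Iic b ⊆ U) : ∃ k, initialBox b k ⊆ U := by
  let := PiNat.metricSpaceNatNat
  obtain ⟨δ, hδ, hδU⟩ := (isCompact_Iic_nat b).exists_thickening_subset_open hU hbU
  obtain ⟨k, hk⟩ := exists_pow_lt_of_lt_one hδ one_half_lt_one
  refine ⟨k, fun z hz => hδU (Metric.mem_thickening_iff.2 ⟨z ⊓ b, mem_Iic.2 inf_le_right, ?_⟩)⟩
  have hcylinder : z ∈ PiNat.cylinder (z ⊓ b) k := fun i hi => (inf_eq_left.2 (hz i hi)).symm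
  exact (PiNat.mem_cylinder_iff_dist_le.1 hcylinder).trans_lt hk

theorem iInter_closure_image_subset [TopologicalSpace α] [TopologicalSpace X] [T2Space X]
    {f : α → X} (hf : Continuous f) {ι : Type*} {E : ι → Set α} {K : Set α} (hK : IsCompact K)
    (hE : ∀ U, IsOpen U → K ⊆ U → ∃ i, E i ⊆ U) : ⋂ i, closure (f '' E i) ⊆ f '' K := by
  intro x hx
  by_contra hxK
  obtain ⟨U, V, hU, hV, hKU, hxV, hUV⟩ := (hK.image hf).separation_of_notMem hxK
  obtain ⟨i, hi⟩ := hE (f ⁻¹' U) (hU.preimage hf) (image_subset_iff.1 hKU)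
  obtain ⟨y, hyV, hy⟩ := mem_closure_iff.1 (mem_iInter.1 hx i) V hV hxV
  exact disjoint_left.1 hUV (image_subset_iff.2 hi hy) hyV

variable [MeasurableSpace X]

theorem exists_lt_measure_image_inter_le (μ : Measure X) (f : α → X) (r : α → ℕ) {S : Set α}
    {c : ℝ≥0∞} (hc : c < μ (f '' S)) : ∃ m, c < μ (f '' (S ∩ {z | r z ≤ m})) := by
  have hmono : Monotone fun m => f '' (S ∩ {z | r z ≤ m}) := fun m n hmn =>
    image_mono (inter_subset_inter_right S fun z hz => le_trans hz hmn)
  have hunion : f '' S = ⋃ m, f '' (S ∩ {z | r z ≤ m}) := by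
    rw [← image_iUnion, ← inter_iUnion, iUnion_eq_univ_iff.2 fun z => ⟨r z, mem_ofPred.2 le_rfl⟩,
      inter_univ]
  rw [hunion, hmono.measure_iUnion] at hc
  exact lt_iSup_iff.1 hc

theorem exists_forall_lt_measure_image_initialBox (μ : Measure X) (f : (ℕ → ℕ) → X) {c : ℝ≥0∞}
    (hc : c < μ (range f)) : ∃ b, ∀ k, c < μ (f '' initialBox b k) := by
  choose m hm using fun (k : ℕ) (S : {S : Set (ℕ → ℕ) // c < μ (f '' S)}) =>
    exists_lt_measure_image_inter_le μ f (fun z => z k) S.2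
  let S : ℕ → {S : Set (ℕ → ℕ) // c < μ (f '' S)} := fun k =>
    Nat.rec ⟨univ, by rwa [image_univ]⟩ (fun k S => ⟨S.1 ∩ {z | z k ≤ m k S}, hm k S⟩) k
  have hS : ∀ k, (S k).1 ⊆ initialBox (fun i => m i (S i)) k := by
    intro k
    induction k with
    | zero => exact fun z _ i hi => absurd hi i.not_lt_zero
    | succ k ih => exact fun z hz => Nat.forall_lt_succ_right.2 ⟨ih hz.1, hz.2⟩
  exact ⟨fun i => m i (S i), fun k => (S k).2.trans_le (measure_mono (image_mono (hS k)))⟩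

variable [TopologicalSpace X] [T2Space X] [OpensMeasurableSpace X]

theorem exists_isCompact_le_measure_image (μ : Measure X) [IsFiniteMeasure μ] {f : (ℕ → ℕ) → X}
    (hf : Continuous f) {c : ℝ≥0∞} (hc : c < μ (range f)) :
    ∃ K : Set (ℕ → ℕ), IsCompact K ∧ c ≤ μ (f '' K) := by
  obtain ⟨b, hb⟩ := exists_forall_lt_measure_image_initialBox μ f hc
  have hanti : Antitone fun k => closure (f '' initialBox b k) := fun _ _ hkn =>
    closure_mono (image_mono (antitone_initialBox b hkn))
  refine ⟨Iic b, isCompact_Iic_nat b, ?_⟩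
  calc c ≤ ⨅ k, μ (closure (f '' initialBox b k)) :=
        le_iInf fun k => (hb k).le.trans (measure_mono subset_closure)
    _ = μ (⋂ k, closure (f '' initialBox b k)) :=
        (hanti.measure_iInter (fun k => isClosed_closure.measurableSet.nullMeasurableSet)
          ⟨0, measure_ne_top μ _⟩).symm
    _ ≤ μ (f '' Iic b) := measure_mono <| iInter_closure_image_subset hf (isCompact_Iic_nat b)
        fun U hU hbU => exists_initialBox_subset hU hbU

theorem measurableSet_of_isSigmaCompact {s : Set X} (hs : IsSigmaCompact s) : MeasurableSet s := by
  obtain ⟨K, hK, rfl⟩ := hs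
  exact .iUnion fun n => (hK n).measurableSet

theorem exists_isSigmaCompact_image_ae_eq_range (μ : Measure X) [IsFiniteMeasure μ]
    {f : (ℕ → ℕ) → X} (hf : Continuous f) :
    ∃ L : Set (ℕ → ℕ), IsSigmaCompact L ∧ f '' L =ᵐ[μ] range f := by
  rcases eq_zero_or_pos (μ (range f)) with hzero | hpos
  · refine ⟨∅, isSigmaCompact_empty, ?_⟩
    rw [image_empty]
    exact (ae_eq_empty.2 hzero).symm
  obtain ⟨c, -, hc, hclim⟩ := exists_seq_strictMono_tendsto' hpos
  choose K hK hcK using fun n => exists_isCompact_le_measure_image μ hf (hc n).2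
  have hL : IsSigmaCompact (⋃ n, K n) := isSigmaCompact_iUnion_of_isCompact K hK
  have hmeasure : μ (range f) ≤ μ (f '' ⋃ n, K n) := le_of_tendsto' hclim fun n =>
    (hcK n).trans (measure_mono (image_mono (subset_iUnion K n)))
  exact ⟨⋃ n, K n, hL, ae_eq_of_subset_of_measure_ge (image_subset_range f _) hmeasure
    (measurableSet_of_isSigmaCompact (hL.image hf)).nullMeasurableSet (measure_ne_top μ _)⟩

theorem exists_isSigmaCompact_subset_image_ae_eq [TopologicalSpace α] (μ : Measure X) [SFinite μ]
    {f : α → X} (hf : Continuous f) {S : Set α} (hS : AnalyticSet S) :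
    ∃ L ⊆ S, IsSigmaCompact L ∧ f '' L =ᵐ[μ] f '' S := by
  rw [AnalyticSet] at hS
  obtain rfl | ⟨h, hh, rfl⟩ := hS
  · exact ⟨∅, subset_rfl, isSigmaCompact_empty, .rfl⟩
  · obtain ⟨L, hL, hLS⟩ := exists_isSigmaCompact_image_ae_eq_range μ.toFinite (hf.comp hh)
    rw [ae_toFinite, image_comp, range_comp] at hLS
    exact ⟨h '' L, image_subset_range h L, hL.image hh, hLS⟩

end Capacity

section Sections

theorem isSigmaCompact_prod {α β : Type*} [TopologicalSpace α] [TopologicalSpace β] {s : Set α}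
    {t : Set β} (hs : IsSigmaCompact s) (ht : IsSigmaCompact t) : IsSigmaCompact (s ×ˢ t) := by
  obtain ⟨K, hK, rfl⟩ := hs
  obtain ⟨L, hL, rfl⟩ := ht
  simp only [iUnion_prod_const, prod_iUnion]
  exact isSigmaCompact_iUnion _ fun j => isSigmaCompact_iUnion_of_isCompact _ fun i =>
    (hK i).prod (hL j)

theorem exists_isSigmaCompact_subset_ae_not_countable_section {X Y : Type*} [TopologicalSpace X]
    [T2Space X] [MeasurableSpace X] [OpensMeasurableSpace X] [TopologicalSpace Y] [T2Space Y]
    (μ : Measure X) [SFinite μ] {A : Set (X × Y)} (hA : AnalyticSet A) :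
    ∃ B ⊆ A, IsSigmaCompact B ∧
      ∀ᵐ x ∂μ, ¬ {y | (x, y) ∈ A}.Countable → ¬ {y | (x, y) ∈ B}.Countable := by
  obtain ⟨α, _, _, F, hF, rfl⟩ := analyticSet_iff_exists_polishSpace_range.1 hA
  let p : α → X := fun z => (F z).1
  let q : α → Y := fun z => (F z).2
  have hp : Continuous p := continuous_fst.comp hF
  have hq : Continuous q := continuous_snd.comp hF
  let base : C(ℕ → Bool, α) → X := fun g => p (g 0)
  obtain ⟨L, hLG, hL, hbase⟩ := exists_isSigmaCompact_subset_image_ae_eq μ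
    (hp.comp (continuous_eval_const 0) : Continuous base)
    (analyticSet_fiberEmbeddings (K := ℕ → Bool) hp hq)
  let track : C(ℕ → Bool, α) × (ℕ → Bool) → X × Y := fun ga => F (ga.1 ga.2)
  have htrack : Continuous track := hF.comp continuous_eval
  refine ⟨track '' (L ×ˢ univ), ?_, (isSigmaCompact_prod hL isSigmaCompact_univ).image htrack, ?_⟩
  · rintro _ ⟨ga, -, rfl⟩
    exact mem_range_self _
  filter_upwards [hbase.mem_iff] with x hx hxA
  have hxq : ¬ (q '' (p ⁻¹' {x})).Countable := by
    refine mt (Countable.mono ?_) hxA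
    rintro y ⟨z, hz⟩
    exact ⟨z, congrArg Prod.fst hz, congrArg Prod.snd hz⟩
  obtain ⟨g, hg, hgx⟩ := exists_mem_fiberEmbeddings hp hq hxq
  obtain ⟨h, hhL, rfl⟩ := hx.2 ⟨g, hg, hgx 0⟩
  exact not_countable_section_of_mem_fiberEmbeddings (hLG hhL)
    (fun a => mem_image_of_mem track (mk_mem_prod hhL (mem_univ a))) 0

theorem analyticSet_of_isAnalyticS {W : Type*} [TopologicalSpace W] [SecondCountableTopology W]
    [MeasurableSpace W] [OpensMeasurableSpace W] {A : Set W} (hA : IsAnalyticS A) :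
    AnalyticSet A := by
  obtain ⟨Z, _, _, B, f, hB, hf, rfl⟩ := hA
  exact hB.analyticSet_image hf

end Sections

theorem statement0_general {X Y : Type*} [MeasurableSpace X] [StandardBorelSpace X]
    [MeasurableSpace Y] [StandardBorelSpace Y] (μ : Measure X) [SFinite μ] {A : Set (X × Y)}
    (hA : IsAnalyticS A) :
    ∃ B : Set (X × Y), MeasurableSet B ∧ B ⊆ A ∧
      ∀ᵐ x ∂μ, ¬ {y | (x, y) ∈ A}.Countable → ¬ {y | (x, y) ∈ B}.Countable := by
  let := upgradeStandardBorel X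
  let := upgradeStandardBorel Y
  obtain ⟨B, hBA, hB, hae⟩ := exists_isSigmaCompact_subset_ae_not_countable_section μ
    (analyticSet_of_isAnalyticS hA)
  exact ⟨B, measurableSet_of_isSigmaCompact hB, hBA, hae⟩

/-- Lemma 2.1: Borel refinement of an analytic set with uncountable
fibers, keeping almost all fibers uncountable. -/
theorem statement0 {X Y : Type} [MeasurableSpace X] [StandardBorelSpace X]
    [MeasurableSpace Y] [StandardBorelSpace Y]
    (μ : Measure X) [IsProbabilityMeasure μ]
    (A : Set (X × Y)) (hA : IsAnalyticS A)
    (hfib : ∀ x : X, ¬ {y : Y | (x, y) ∈ A}.Countable) :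
    ∃ Abar : Set (X × Y), MeasurableSet Abar ∧ Abar ⊆ A ∧
      ∀ᵐ x ∂μ, ¬ {y : Y | (x, y) ∈ Abar}.Countable := by
  obtain ⟨B, hB, hBA, hae⟩ := statement0_general μ hA
  exact ⟨B, hB, hBA, hae.mono fun x hx => hx (hfib x)⟩
end

section
/- Let X be a standard Borel space equipped with a Borel probability measure μ, let Y be a standard Borel space, and let A ⊆ X × Y be an analytic set such that for every x ∈ X the fiber {y ∈ Y : (x, y) ∈ A} is uncountable. Then there exists a μ-conull Borel set X' ⊆ X and a Borel injection f : X' → Y such that (x, f(x)) ∈ A for every x ∈ X'. -/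
open MeasureTheory Set Function
open scoped ENNReal symmDiff

/-!
Uncountable analytic fibers contain Cantor sets, and measurable uniformization up to null sets
selects them measurably: almost every fiber of `A` contains the image of a map `ψ x` defined on
`2^ℕ` that is injective off a null set of pairs.

To choose points injectively, code every `x` by a sequence of bits `e x`, in such a way that
eventually equal codes come from equal points, and look for a decoder `Y → 2^ℕ` such that almost
every fiber contains a point whose decoded bits are eventually those of `e x`. A random decoder
works: the `k`-th bit is a fair coin toss depending only on `k` and on a prefix of length `n k` of
the input. If the prefixes are long enough, two random points of a fiber have different `k`-th
prefixes with probability so close to one that the second moment method yields, for almost every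
toss, points of the fiber decoding correctly on each window `[m, n)`; compactness of `2^ℕ` then
gives a point decoding correctly from `m` on. By Fubini's theorem a single outcome of the tosses
serves almost every `x`. Selecting such a point measurably gives `f`, which is injective because
the decoder recovers `x` from `f x`.
-/

open Filter Topology TopologicalSpace

theorem isOpen_setOf_res_eq {α : Type*} [TopologicalSpace α] [DiscreteTopology α] (n : ℕ)
    (l : List α) : IsOpen {σ : ℕ → α | PiNat.res σ n = l} := by
  refine isOpen_iff_mem_nhds.2 fun σ (hσ : PiNat.res σ n = l) => ?_
  filter_upwards [(PiNat.isOpen_cylinder _ σ n).mem_nhds (PiNat.self_mem_cylinder _ _)] with τ hτ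
  rw [PiNat.cylinder_eq_res] at hτ
  exact hτ.trans hσ

theorem exists_forall_lt_measure_image_setOf_le {X : Type*} [MeasurableSpace X] {μ : Measure X}
    {u : (ℕ → ℕ) → X} {a : ℝ≥0∞} (ha : a < μ (range u)) :
    ∃ b : ℕ → ℕ, ∀ n, a < μ (u '' {σ | ∀ i < n, σ i ≤ b i}) := by
  have exists_bound (S : {S : Set (ℕ → ℕ) // a < μ (u '' S)}) (n : ℕ) :
      ∃ m, a < μ (u '' (S.1 ∩ {σ | σ n ≤ m})) := by
    have hmono : Monotone fun m => u '' (S.1 ∩ {σ | σ n ≤ m}) := fun m m' h =>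
      image_mono (inter_subset_inter_right _ fun σ hσ => le_trans hσ h)
    have hunion : ⋃ m, {σ : ℕ → ℕ | σ n ≤ m} = univ :=
      iUnion_eq_univ_iff.2 fun σ => ⟨σ n, le_refl (σ n)⟩
    rw [← lt_iSup_iff, ← hmono.measure_iUnion, ← image_iUnion, ← inter_iUnion, hunion, inter_univ]
    exact S.2
  choose m hm using exists_bound
  let S : ℕ → {S : Set (ℕ → ℕ) // a < μ (u '' S)} :=
    Nat.rec ⟨univ, by rwa [image_univ]⟩ fun n S => ⟨S.1 ∩ {σ | σ n ≤ m S n}, hm S n⟩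
  refine ⟨fun n => m (S n) n, fun n => (S n).2.trans_le (measure_mono (image_mono ?_))⟩
  induction n with
  | zero => simp
  | succ n ih =>
    exact fun σ hσ i hi => (Nat.lt_succ_iff_lt_or_eq.1 hi).elim (ih hσ.1 i) fun h => h ▸ hσ.2

theorem exists_setOf_le_subset_of_isOpen {b : ℕ → ℕ} {W : Set (ℕ → ℕ)} (hW : IsOpen W)
    (hbW : Iic b ⊆ W) : ∃ n, {σ | ∀ i < n, σ i ≤ b i} ⊆ W := by
  let := PiNat.metricSpaceNatNat
  have hcompact : IsCompact (Iic b) := Icc_bot (a := b) ▸ isCompact_Icc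
  obtain ⟨δ, hδ, hthick⟩ := hcompact.exists_thickening_subset_open hW hbW
  obtain ⟨n, hn⟩ := exists_pow_lt_of_lt_one hδ one_half_lt_one
  refine ⟨n, fun σ hσ => hthick (Metric.mem_thickening_iff.2 ⟨σ ⊓ b, fun i => inf_le_right, ?_⟩)⟩
  exact (PiNat.mem_cylinder_iff_dist_le.1 fun i hi => (inf_eq_left.2 (hσ i hi)).symm).trans_lt hn

theorem exists_le_measure_image_Iic {X : Type*} [TopologicalSpace X] [MeasurableSpace X]
    {μ : Measure X} [μ.OuterRegular] {u : (ℕ → ℕ) → X} (hu : Continuous u) {a : ℝ≥0∞}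
    (ha : a < μ (range u)) : ∃ b : ℕ → ℕ, a ≤ μ (u '' Iic b) := by
  obtain ⟨b, hb⟩ := exists_forall_lt_measure_image_setOf_le ha
  refine ⟨b, ?_⟩
  rw [Set.measure_eq_iInf_isOpen]
  refine le_iInf₂ fun O hO => le_iInf fun hOopen => ?_
  obtain ⟨n, hn⟩ := exists_setOf_le_subset_of_isOpen (hOopen.preimage hu) (image_subset_iff.1 hO)
  exact (hb n).le.trans (measure_mono (image_subset_iff.2 hn))

theorem nullMeasurableSet_of_forall_lt_measure {X : Type*} [MeasurableSpace X] {μ : Measure X}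
    {A : Set X} (hA : μ A ≠ ∞) (h : ∀ a < μ A, ∃ B ⊆ A, MeasurableSet B ∧ a ≤ μ B) :
    NullMeasurableSet A μ := by
  obtain h0 | h0 := eq_or_ne (μ A) 0
  · exact .of_null h0
  obtain ⟨a, -, ha, hlim⟩ := exists_seq_strictMono_tendsto' (bot_lt_iff_ne_bot.2 h0)
  choose B hBA hB haB using fun n => h (a n) (ha n).2
  have hle : μ A ≤ μ (⋃ n, B n) :=
    le_of_tendsto' hlim fun n => (haB n).trans (measure_mono (subset_iUnion B n))
  have hmeas : NullMeasurableSet (⋃ n, B n) μ := .iUnion fun n => (hB n).nullMeasurableSet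
  exact hmeas.congr (ae_eq_of_subset_of_measure_ge (iUnion_subset hBA) hle hmeas hA)

theorem nullMeasurableSet_of_analyticSet {X : Type*} [TopologicalSpace X] [T2Space X]
    [MeasurableSpace X] [OpensMeasurableSpace X] {μ : Measure X} [IsFiniteMeasure μ]
    [μ.OuterRegular] {A : Set X} (hA : AnalyticSet A) : NullMeasurableSet A μ := by
  rw [AnalyticSet] at hA
  rcases hA with rfl | ⟨u, hu, rfl⟩
  · exact nullMeasurableSet_empty
  refine nullMeasurableSet_of_forall_lt_measure (measure_ne_top _ _) fun a ha => ?_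
  obtain ⟨b, hb⟩ := exists_le_measure_image_Iic hu ha
  have hcompact : IsCompact (u '' Iic b) := (Icc_bot (a := b) ▸ isCompact_Icc).image hu
  exact ⟨u '' Iic b, image_subset_range _ _, hcompact.measurableSet, hb⟩

theorem exists_measurable_branch {X : Type*} [MeasurableSpace X] {B : List ℕ → Set X}
    (hB : ∀ l, MeasurableSet (B l)) (hcover : ∀ l, B l ⊆ ⋃ m, B (m :: l)) :
    ∃ s : X → ℕ → ℕ, Measurable s ∧ ∀ x ∈ B [], ∀ n, x ∈ B (PiNat.res (s x) n) := by
  have exists_digit (l : List ℕ) : ∃ d : X → ℕ, Measurable d ∧ ∀ x ∈ B l, x ∈ B (d x :: l) := by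
    classical
    have hex (x : X) : ∃ m, x ∈ B (m :: l) ∪ (B l)ᶜ := by
      by_cases hx : x ∈ B l
      · exact (mem_iUnion.1 (hcover l hx)).imp fun m => .inl
      · exact ⟨0, .inr hx⟩
    exact ⟨fun x => Nat.find (hex x),
      measurable_find hex fun m => (hB (m :: l)).union (hB l).compl,
      fun x hx => (Nat.find_spec (hex x)).resolve_right (not_not_intro hx)⟩
  choose d hd hdB using exists_digit
  let _ : MeasurableSpace (List ℕ) := ⊤
  have hd_uncurry : Measurable fun q : List ℕ × X => d q.1 q.2 :=
    measurable_from_prod_countable_right hd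
  let p (x : X) : ℕ → List ℕ := Nat.rec [] fun _ l => d l x :: l
  have hp (n : ℕ) : Measurable fun x => p x n := by
    induction n with
    | zero => exact measurable_const
    | succ n ih =>
      exact (measurable_of_countable (uncurry List.cons)).comp
        ((hd_uncurry.comp (ih.prodMk measurable_id)).prodMk ih)
  have hres (x : X) (n : ℕ) : PiNat.res (fun k => d (p x k) x) n = p x n := by
    induction n with
    | zero => rfl
    | succ n ih => rw [PiNat.res_succ, ih]
  refine ⟨fun x n => d (p x n) x, measurable_pi_lambda _ fun n =>
    hd_uncurry.comp ((hp n).prodMk measurable_id), fun x hx n => ?_⟩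
  rw [hres]
  induction n with
  | zero => exact hx
  | succ n ih => exact hdB _ x ih

theorem exists_measurable_section {X : Type*} [TopologicalSpace X] [T1Space X]
    [MeasurableSpace X] {u : (ℕ → ℕ) → X} (hu : Continuous u)
    (hmeas : ∀ l : List ℕ, MeasurableSet (u '' {σ | PiNat.res σ l.length = l})) :
    ∃ s : X → ℕ → ℕ, Measurable s ∧ ∀ x ∈ range u, u (s x) = x := by
  have hcover (l : List ℕ) : u '' {σ | PiNat.res σ l.length = l} ⊆
      ⋃ m, u '' {σ | PiNat.res σ (m :: l).length = m :: l} := by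
    rintro _ ⟨σ, hσ : PiNat.res σ l.length = l, rfl⟩
    exact mem_iUnion.2 ⟨σ l.length, σ, by simp [hσ], rfl⟩
  obtain ⟨s, hs, hsmem⟩ := exists_measurable_branch hmeas hcover
  refine ⟨s, hs, fun x hx => ?_⟩
  have hbranch (n : ℕ) : ∃ σ, PiNat.res σ n = PiNat.res (s x) n ∧ u σ = x := by
    simpa using hsmem x (by simpa using hx) n
  choose σ hσ hσx using hbranch
  have hlim : Tendsto σ atTop (𝓝 (s x)) := by
    refine tendsto_pi_nhds.2 fun k => tendsto_const_nhds.congr' ?_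
    filter_upwards [eventually_gt_atTop k] with n hn
    exact (PiNat.res_eq_res.1 (hσ n) hn).symm
  have hconst := (hu.tendsto _).comp hlim
  rw [comp_def, funext hσx, tendsto_const_nhds_iff] at hconst
  exact hconst.symm

theorem exists_aemeasurable_section {X : Type*} [TopologicalSpace X] [T2Space X]
    [MeasurableSpace X] [OpensMeasurableSpace X] {μ : Measure X} [IsFiniteMeasure μ]
    [μ.OuterRegular] {u : (ℕ → ℕ) → X} (hu : Continuous u) :
    ∃ s : X → ℕ → ℕ, AEMeasurable s μ ∧ ∀ x ∈ range u, u (s x) = x := by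
  have hmeas (l : List ℕ) : NullMeasurableSet (u '' {σ | PiNat.res σ l.length = l}) μ :=
    nullMeasurableSet_of_analyticSet ((isOpen_setOf_res_eq _ l).analyticSet_image hu)
  -- The section theorem applies verbatim to the σ-algebra of null measurable sets.
  obtain ⟨s, hs, hus⟩ := @exists_measurable_section X _ _
    (inferInstanceAs (MeasurableSpace (NullMeasurableSpace X μ))) u hu hmeas
  exact ⟨s, NullMeasurable.aemeasurable hs, hus⟩

theorem exists_measurable_ae_mem {X Z : Type*} [MeasurableSpace X] [StandardBorelSpace X]
    [MeasurableSpace Z] [StandardBorelSpace Z] [Nonempty Z] {μ : Measure X} [IsFiniteMeasure μ]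
    {P : Set (X × Z)} (hP : MeasurableSet P) (hne : ∀ᵐ x ∂μ, ∃ z, (x, z) ∈ P) :
    ∃ f : X → Z, Measurable f ∧ ∀ᵐ x ∂μ, (x, f x) ∈ P := by
  let := upgradeStandardBorel X
  let := upgradeStandardBorel Z
  obtain rfl | ⟨g, hg, hgP⟩ : P = ∅ ∨ ∃ g : (ℕ → ℕ) → X × Z, Continuous g ∧ range g = P := by
    simpa [AnalyticSet] using hP.analyticSet
  · exact ⟨fun _ => Classical.arbitrary Z, measurable_const, by simpa using hne⟩
  obtain ⟨s, hs, hgs⟩ := exists_aemeasurable_section (μ := μ) (continuous_fst.comp hg)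
  have hf : AEMeasurable (fun x => (g (s x)).2) μ :=
    (measurable_snd.comp hg.measurable).comp_aemeasurable hs
  refine ⟨hf.mk, hf.measurable_mk, ?_⟩
  filter_upwards [hne, hf.ae_eq_mk] with x ⟨z, hz⟩ hfx
  obtain ⟨σ, hσ⟩ := hgP ▸ hz
  have hfst : (g (s x)).1 = x := hgs x ⟨σ, congrArg Prod.fst hσ⟩
  have hpair : (x, (g (s x)).2) = g (s x) := Prod.ext hfst.symm rfl
  rw [← hfx, hpair, ← hgP]
  exact mem_range_self _

theorem exists_ne_forall_nhds_image_not_countable {α β : Type*} [TopologicalSpace α]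
    [SecondCountableTopology α] {f : α → β} {C : Set α} (hC : ¬(f '' C).Countable) :
    ∃ x y, f x ≠ f y ∧ (∀ U ∈ 𝓝 x, ¬(f '' (C ∩ U)).Countable) ∧
      ∀ U ∈ 𝓝 y, ¬(f '' (C ∩ U)).Countable := by
  set D := {x ∈ C | ∀ U ∈ 𝓝 x, ¬(f '' (C ∩ U)).Countable}
  have hrest : (f '' (C \ D)).Countable := by
    have hnhds (x) (hx : x ∈ C \ D) : ∃ U ∈ 𝓝 x, (f '' (C ∩ U)).Countable := by
      by_contra! h
      exact hx.2 ⟨hx.1, h⟩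
    choose! U hU hUcount using hnhds
    obtain ⟨T, hT, hTcount, hcover⟩ :=
      countable_cover_nhdsWithin fun x hx => mem_nhdsWithin_of_mem_nhds (hU x hx)
    refine (hTcount.biUnion fun x hx => hUcount x (hT hx)).mono ?_
    rw [← image_iUnion₂, ← inter_iUnion₂]
    exact image_mono fun x hx => ⟨hx.1, hcover hx⟩
  have hD : ¬(f '' D).Subsingleton := fun h => hC <| by
    rw [← sdiff_union_of_subset (sep_subset C _ : D ⊆ C), image_union]
    exact hrest.union h.countable
  obtain ⟨_, ⟨x, hx, rfl⟩, _, ⟨y, hy, rfl⟩, hxy⟩ := not_subsingleton_iff.1 hD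
  exact ⟨x, y, hxy, hx.2, hy.2⟩

theorem exists_closed_splitting_of_image_not_countable {α β : Type*} [PseudoEMetricSpace α]
    [SecondCountableTopology α] [TopologicalSpace β] [T2Space β] {f : α → β} (hf : Continuous f)
    {C : Set α} (hC : IsClosed C) (hunc : ¬(f '' C).Countable) {ε : ℝ≥0∞} (hε : 0 < ε) :
    ∃ D : Bool → Set α, (∀ b, IsClosed (D b) ∧ ¬(f '' D b).Countable) ∧
      (∀ b, D b ⊆ C ∧ Metric.ediam (D b) ≤ ε) ∧ Disjoint (f '' D false) (f '' D true) := by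
  have exists_piece (x : α) (hx : ∀ U ∈ 𝓝 x, ¬(f '' (C ∩ U)).Countable) (W : Set β)
      (hW : W ∈ 𝓝 (f x)) : ∃ D : Set α, (IsClosed D ∧ ¬(f '' D).Countable) ∧
        (D ⊆ C ∧ Metric.ediam D ≤ ε) ∧ f '' D ⊆ W := by
    obtain ⟨r, hr, hrW⟩ := Metric.nhds_basis_closedEBall.mem_iff.1 (hf.continuousAt hW)
    have hpos : 0 < min r (ε / 2) := lt_min hr (ENNReal.half_pos hε.ne')
    refine ⟨C ∩ Metric.closedEBall x (min r (ε / 2)), ⟨hC.inter Metric.isClosed_closedEBall,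
      hx _ (Metric.closedEBall_mem_nhds x hpos)⟩, ⟨inter_subset_left, ?_⟩, ?_⟩
    · calc Metric.ediam (C ∩ Metric.closedEBall x (min r (ε / 2)))
          ≤ Metric.ediam (Metric.closedEBall x (min r (ε / 2))) :=
            Metric.ediam_mono inter_subset_right
        _ ≤ 2 * min r (ε / 2) := Metric.ediam_closedEBall_le
        _ ≤ 2 * (ε / 2) := by gcongr; exact min_le_right _ _
        _ = ε := ENNReal.mul_div_cancel two_ne_zero ENNReal.ofNat_ne_top
    · exact image_subset_iff.2 fun y hy =>
        hrW (Metric.closedEBall_subset_closedEBall (min_le_left _ _) hy.2)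
  obtain ⟨x, y, hxy, hx, hy⟩ := exists_ne_forall_nhds_image_not_countable hunc
  obtain ⟨U, V, hU, hV, hUV⟩ := t2_separation_nhds hxy
  obtain ⟨D, hD, hDC, hDU⟩ := exists_piece x hx U hU
  obtain ⟨E, hE, hEC, hEV⟩ := exists_piece y hy V hV
  exact ⟨fun b => cond b E D, Bool.forall_bool.2 ⟨hD, hE⟩, Bool.forall_bool.2 ⟨hDC, hEC⟩,
    hUV.mono hDU hEV⟩

theorem exists_continuousMap_comp_injective_of_cantorScheme {ι α β : Type*} [TopologicalSpace ι]
    [DiscreteTopology ι] [PseudoMetricSpace α] [CompleteSpace α] {D : List ι → Set α}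
    (hanti : CantorScheme.ClosureAntitone D) (hdiam : CantorScheme.VanishingDiam D)
    (hne : ∀ l, (D l).Nonempty) {f : α → β} (hdisj : CantorScheme.Disjoint fun l => f '' D l) :
    ∃ φ : C(ℕ → ι, α), (∀ c, φ c ∈ D []) ∧ Injective (f ∘ φ) := by
  have hdom (c : ℕ → ι) : c ∈ (CantorScheme.inducedMap D).1 :=
    hanti.map_of_vanishingDiam hdiam hne ▸ mem_univ c
  let φ (c : ℕ → ι) : α := (CantorScheme.inducedMap D).2 ⟨c, hdom c⟩
  have hφ (c : ℕ → ι) (n : ℕ) : φ c ∈ D (PiNat.res c n) := CantorScheme.map_mem ⟨c, hdom c⟩ n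
  refine ⟨⟨φ, hdiam.map_continuous.comp (by fun_prop)⟩, fun c => hφ c 0, fun c c' hcc' =>
    PiNat.res_injective (funext fun n => ?_)⟩
  induction n with
  | zero => rfl
  | succ n ih =>
    have hc : f (φ c) ∈ f '' D (c n :: PiNat.res c n) := mem_image_of_mem f (hφ c (n + 1))
    have hc' : f (φ c) ∈ f '' D (c' n :: PiNat.res c n) := by
      rw [show f (φ c) = f (φ c') from hcc', ih]
      exact mem_image_of_mem f (hφ c' (n + 1))
    rw [PiNat.res_succ, PiNat.res_succ, ← ih,
      (hdisj (PiNat.res c n)).eq (not_disjoint_iff.2 ⟨_, hc, hc'⟩)]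

theorem exists_nat_bool_continuousMap_comp_injective {α β : Type*} [TopologicalSpace α]
    [PolishSpace α] [TopologicalSpace β] [T2Space β] {f : α → β} (hf : Continuous f) {C : Set α}
    (hC : IsClosed C) (hunc : ¬(f '' C).Countable) :
    ∃ φ : C(ℕ → Bool, α), (∀ c, φ c ∈ C) ∧ Injective (f ∘ φ) := by
  let := upgradeIsCompletelyMetrizable α
  choose split hsplit hsub hdisj using fun (S : {S : Set α // IsClosed S ∧ ¬(f '' S).Countable})
    (n : ℕ) => exists_closed_splitting_of_image_not_countable hf S.2.1 S.2.2
      (ENNReal.pow_pos (ENNReal.inv_pos.2 ENNReal.ofNat_ne_top) n : 0 < (2⁻¹ : ℝ≥0∞) ^ n)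
  let S : List Bool → {S : Set α // IsClosed S ∧ ¬(f '' S).Countable} :=
    List.rec ⟨C, hC, hunc⟩ fun b l S => ⟨split S l.length b, hsplit S l.length b⟩
  refine exists_continuousMap_comp_injective_of_cantorScheme (D := fun l => (S l).1)
    (CantorScheme.Antitone.closureAntitone (fun l b => (hsub (S l) l.length b).1)
      fun l => (S l).2.1) (fun c => ?_) (fun l => ?_) fun l => ?_
  · rw [← tendsto_add_atTop_iff_nat 1]
    refine tendsto_of_tendsto_of_tendsto_of_le_of_le tendsto_const_nhds
      (ENNReal.tendsto_pow_atTop_nhds_zero_of_lt_one (ENNReal.inv_lt_one.2 ENNReal.one_lt_two))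
      (fun _ => zero_le) fun n => ?_
    exact (hsub _ _ _).2.trans_eq (by rw [PiNat.res_length])
  · by_contra! hempty
    exact (S l).2.2 (by rw [hempty, image_empty]; exact countable_empty)
  · rintro (_ | _) (_ | _) hab <;> try contradiction
    exacts [hdisj _ _, (hdisj _ _).symm]

theorem measure_prod_diagonal {α : Type*} [MeasurableSpace α] [MeasurableEq α]
    (ν : Measure α) [SFinite ν] [NullSingletonClass ν] : (ν.prod ν) (diagonal α) = 0 := by
  rw [Measure.measure_prod_null measurableSet_diagonal]
  filter_upwards with a
  exact measure_mono_null (fun b hb => hb.symm) (measure_singleton a)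

theorem exists_measurable_family_nat_bool_maps {X Y : Type*} [TopologicalSpace X] [PolishSpace X]
    [MeasurableSpace X] [BorelSpace X] [TopologicalSpace Y] [PolishSpace Y] [MeasurableSpace Y]
    [BorelSpace Y] {μ : Measure X} [IsFiniteMeasure μ] [NeZero μ] {A : Set (X × Y)}
    (hA : AnalyticSet A) (hfib : ∀ᵐ x ∂μ, ¬{y | (x, y) ∈ A}.Countable)
    (ν : Measure (ℕ → Bool)) [SFinite ν] [NullSingletonClass ν] :
    ∃ ψ : X → (ℕ → Bool) → Y, Measurable (uncurry ψ) ∧ (∀ x, Continuous (ψ x)) ∧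
      ∀ᵐ x ∂μ, (∀ c, (x, ψ x c) ∈ A) ∧ (ν.prod ν) {p | ψ x p.1 = ψ x p.2} = 0 := by
  obtain ⟨β, _, _, g, hg, rfl⟩ := analyticSet_iff_exists_polishSpace_range.1 hA
  let := upgradeIsCompletelyMetrizable β
  let : MeasurableSpace C(ℕ → Bool, β) := borel _
  have : BorelSpace C(ℕ → Bool, β) := ⟨rfl⟩
  let N (φ : C(ℕ → Bool, β)) : Set ((ℕ → Bool) × (ℕ → Bool)) :=
    {p | (g (φ p.1)).2 = (g (φ p.2)).2}
  -- Injectivity is not evidently a Borel condition on a continuous map, whereas nullity of the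
  -- coincidence set is, and it is all that the second moment estimate needs.
  let P : Set (X × C(ℕ → Bool, β)) := {q | (∀ c, (g (q.2 c)).1 = q.1) ∧ (ν.prod ν) (N q.2) = 0}
  have hfirst : IsClosed {q : X × C(ℕ → Bool, β) | ∀ c, (g (q.2 c)).1 = q.1} := by
    rw [ofPred_forall]
    exact isClosed_iInter fun c => isClosed_eq (by fun_prop) (by fun_prop)
  have hsecond : IsClosed {q : C(ℕ → Bool, β) × (ℕ → Bool) × (ℕ → Bool) | q.2 ∈ N q.1} :=
    isClosed_eq (by fun_prop) (by fun_prop)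
  have hP : MeasurableSet P := hfirst.measurableSet.inter
    (measurable_snd (measurable_measure_prodMk_left (ν := ν.prod ν) hsecond.measurableSet
      (measurableSet_singleton 0)))
  have hne : ∀ᵐ x ∂μ, ∃ φ, (x, φ) ∈ P := by
    filter_upwards [hfib] with x hx
    have himage : {y | (x, y) ∈ range g} = (fun b => (g b).2) '' {b | (g b).1 = x} := by
      ext y
      simp [Prod.ext_iff]
    rw [himage] at hx
    obtain ⟨φ, hφ, hinj⟩ := exists_nat_bool_continuousMap_comp_injective
      (by fun_prop) (isClosed_eq (by fun_prop) continuous_const) hx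
    exact ⟨φ, hφ, measure_mono_null (fun p hp => hinj hp) (measure_prod_diagonal ν)⟩
  have : Nonempty C(ℕ → Bool, β) := hne.exists.elim fun _ h => h.nonempty
  obtain ⟨Φ, hΦ, hΦP⟩ := exists_measurable_ae_mem hP hne
  refine ⟨fun x c => (g (Φ x c)).2, ?_, fun x => by fun_prop, ?_⟩
  · have heval : Continuous fun q : C(ℕ → Bool, β) × (ℕ → Bool) => (g (q.1 q.2)).2 := by fun_prop
    exact heval.measurable.comp ((hΦ.comp measurable_fst).prodMk measurable_snd)
  · filter_upwards [hΦP] with x hx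
    exact ⟨fun c => ⟨Φ x c, Prod.ext (hx.1 c) rfl⟩, hx.2⟩

theorem sq_lintegral_le_measure_support_mul {Ω : Type*} [MeasurableSpace Ω] {μ : Measure Ω}
    {Z : Ω → ℝ≥0∞} (hZ : Measurable Z) :
    (∫⁻ ω, Z ω ∂μ) ^ 2 ≤ μ (support Z) * ∫⁻ ω, Z ω ^ 2 ∂μ := by
  have hsupp : MeasurableSet (support Z) := measurableSet_support hZ
  have hmul : (support Z).indicator 1 * Z = Z := by
    ext ω
    by_cases hω : Z ω = 0 <;> simp [hω]
  have hsq (ω : Ω) :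
      (support Z).indicator (1 : Ω → ℝ≥0∞) ω ^ (2 : ℝ) = (support Z).indicator 1 ω := by
    by_cases hω : Z ω = 0 <;> simp [hω]
  have hholder := ENNReal.lintegral_mul_le_Lp_mul_Lq μ Real.HolderConjugate.two_two
    (measurable_one.indicator hsupp).aemeasurable hZ.aemeasurable
  simp only [hmul, hsq, ENNReal.rpow_ofNat] at hholder
  rw [lintegral_indicator_one hsupp, ← ENNReal.mul_rpow_of_nonneg _ _ (by positivity),
    one_div, ENNReal.le_rpow_inv_iff two_pos, ENNReal.rpow_two] at hholder
  exact hholder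

theorem measure_eq_zero_le_of_lintegral_sq_le {Ω : Type*} [MeasurableSpace Ω] {μ : Measure Ω}
    [IsProbabilityMeasure μ] {Z : Ω → ℝ≥0∞} (hZ : Measurable Z) {δ : ℝ≥0∞}
    (h0 : ∫⁻ ω, Z ω ∂μ ≠ 0) (htop : ∫⁻ ω, Z ω ∂μ ≠ ∞)
    (hδ : ∫⁻ ω, Z ω ^ 2 ∂μ ≤ (∫⁻ ω, Z ω ∂μ) ^ 2 * (1 + δ)) : μ {ω | Z ω = 0} ≤ δ := by
  have hone : 1 ≤ μ (support Z) * (1 + δ) := by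
    refine (ENNReal.mul_le_mul_iff_right (pow_ne_zero 2 h0) (ENNReal.pow_ne_top htop)).1 ?_
    calc (∫⁻ ω, Z ω ∂μ) ^ 2 * 1 ≤ μ (support Z) * ∫⁻ ω, Z ω ^ 2 ∂μ := by
          rw [mul_one]; exact sq_lintegral_le_measure_support_mul hZ
      _ ≤ μ (support Z) * ((∫⁻ ω, Z ω ∂μ) ^ 2 * (1 + δ)) := by gcongr
      _ = (∫⁻ ω, Z ω ∂μ) ^ 2 * (μ (support Z) * (1 + δ)) := by ring
  have hcompl : (support Z)ᶜ = {ω | Z ω = 0} := by ext; simp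
  rw [← hcompl, prob_compl_eq_one_sub (measurableSet_support hZ), tsub_le_iff_left]
  calc 1 ≤ μ (support Z) + μ (support Z) * δ := by rwa [mul_add, mul_one] at hone
    _ ≤ μ (support Z) + 1 * δ := by gcongr; exact prob_le_one
    _ = μ (support Z) + δ := by rw [one_mul]

theorem lintegral_measure_preimage_prodMk_sq {Ω γ : Type*} [MeasurableSpace Ω] [MeasurableSpace γ]
    {μ : Measure Ω} [SFinite μ] {ν : Measure γ} [SFinite ν] {R : Set (Ω × γ)}
    (hR : MeasurableSet R) :
    ∫⁻ ω, ν (Prod.mk ω ⁻¹' R) ^ 2 ∂μ =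
      ∫⁻ p, μ {ω | (ω, p.1) ∈ R ∧ (ω, p.2) ∈ R} ∂ν.prod ν := by
  let R₂ : Set (Ω × γ × γ) := {q | (q.1, q.2.1) ∈ R ∧ (q.1, q.2.2) ∈ R}
  have hR₂ : MeasurableSet R₂ := by
    have hfst : Measurable fun q : Ω × γ × γ => (q.1, q.2.1) := by fun_prop
    have hsnd : Measurable fun q : Ω × γ × γ => (q.1, q.2.2) := by fun_prop
    exact (hfst hR).inter (hsnd hR)
  calc ∫⁻ ω, ν (Prod.mk ω ⁻¹' R) ^ 2 ∂μ = ∫⁻ ω, (ν.prod ν) (Prod.mk ω ⁻¹' R₂) ∂μ := by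
        simp_rw [sq, ← Measure.prod_prod]
        rfl
    _ = ∫⁻ p, μ ((fun ω => (ω, p)) ⁻¹' R₂) ∂ν.prod ν := by
        rw [← Measure.prod_apply hR₂, Measure.prod_apply_symm hR₂]
    _ = _ := rfl

theorem two_pow_card_le_one_add_sum_two_pow (T : Finset ℕ) : 2 ^ T.card ≤ 1 + ∑ k ∈ T, 2 ^ k := by
  induction T using Finset.induction_on_max with
  | empty => simp
  | insert a T ha ih =>
    have hcard : T.card ≤ a := by
      simpa using Finset.card_le_card fun k hk => Finset.mem_range.2 (ha k hk)
    have hpow : 2 ^ T.card ≤ 2 ^ a := Nat.pow_le_pow_right two_pos hcard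
    have haT : a ∉ T := fun h => (ha a h).false
    rw [Finset.card_insert_of_notMem haT, Finset.sum_insert haT, pow_succ]
    lia

/-- The law of a family of independent fair coin tosses indexed by `ι`. -/
noncomputable def fairCoins (ι : Type*) : Measure (ι → Bool) :=
  Measure.infinitePi fun _ => (PMF.uniformOfFintype Bool).toMeasure

instance (ι : Type*) : IsProbabilityMeasure (fairCoins ι) :=
  inferInstanceAs (IsProbabilityMeasure (Measure.infinitePi _))

theorem fairCoins_setOf_forall_eq {ι : Type*} (S : Finset ι) (t : ι → Bool) :
    fairCoins ι {ω | ∀ i ∈ S, ω i = t i} = 2⁻¹ ^ S.card := by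
  have hpi : {ω : ι → Bool | ∀ i ∈ S, ω i = t i} = (S : Set ι).pi fun i => {t i} := rfl
  rw [hpi, fairCoins, Measure.infinitePi_pi _ fun i _ => measurableSet_singleton _]
  simp

instance (ι : Type*) [Infinite ι] : NullSingletonClass (fairCoins ι) := by
  refine ⟨fun t => nonpos_iff_eq_zero.1 (ge_of_tendsto'
    (ENNReal.tendsto_pow_atTop_nhds_zero_of_lt_one (ENNReal.inv_lt_one.2 ENNReal.one_lt_two))
    fun n => ?_)⟩
  obtain ⟨S, hS⟩ := Infinite.exists_subset_card_eq ι n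
  rw [← hS, ← fairCoins_setOf_forall_eq S t]
  exact measure_mono fun ω hω i _ => congrFun hω i

theorem measurable_apply_mk_apply {I L γ : Type*} [MeasurableSpace L] [Countable L]
    [DiscreteMeasurableSpace L] [MeasurableSpace γ] {κ : γ → L} (hκ : Measurable κ) (i : I) :
    Measurable fun q : (I × L → Bool) × γ => q.1 (i, κ q.2) := by
  have heval : Measurable fun q : (I × L → Bool) × L => q.1 (i, q.2) :=
    measurable_from_prod_countable_left fun l => measurable_pi_apply (i, l)
  exact heval.comp (measurable_fst.prodMk (hκ.comp measurable_snd))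

theorem fairCoins_setOf_forall_prodMk_eq {I L : Type*} (S : Finset I) (t : I → Bool) (l : I → L) :
    fairCoins (I × L) {ω | ∀ i ∈ S, ω (i, l i) = t i} = 2⁻¹ ^ S.card := by
  classical
  have hinj : Injective fun i => (i, l i) := fun _ _ h => congrArg Prod.fst h
  simpa [Finset.card_image_of_injective S hinj] using
    fairCoins_setOf_forall_eq (S.image fun i => (i, l i)) fun j => t j.1

theorem fairCoins_setOf_forall_prodMk_eq_and {I L : Type*} [DecidableEq L] (S : Finset I)
    (t : I → Bool) (l l' : I → L) :
    fairCoins (I × L) {ω | (∀ i ∈ S, ω (i, l i) = t i) ∧ ∀ i ∈ S, ω (i, l' i) = t i} =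
      (2⁻¹ ^ S.card) ^ 2 * 2 ^ {i ∈ S | l i = l' i}.card := by
  classical
  let T (k : I → L) : Finset (I × L) := S.image fun i => (i, k i)
  have hinj (k : I → L) : Injective fun i => (i, k i) := fun i j h => congrArg Prod.fst h
  have hT (k : I → L) : (T k).card = S.card := Finset.card_image_of_injective S (hinj k)
  have hinter : T l ∩ T l' = {i ∈ S | l i = l' i}.image fun i => (i, l i) := by
    ext ⟨i, m⟩
    simp [T]
    grind
  have hcard : (T l ∪ T l').card + {i ∈ S | l i = l' i}.card = S.card * 2 := by
    rw [← Finset.card_image_of_injective _ (hinj l), ← hinter, Finset.card_union_add_card_inter,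
      hT, hT, mul_two]
  have hset : {ω : I × L → Bool | (∀ i ∈ S, ω (i, l i) = t i) ∧ ∀ i ∈ S, ω (i, l' i) = t i} =
      {ω | ∀ j ∈ T l ∪ T l', ω j = t j.1} := by
    ext ω
    simp [T, or_imp, forall_and]
  rw [hset, fairCoins_setOf_forall_eq _ fun j : I × L => t j.1, ← pow_mul, ← hcard, pow_add,
    mul_assoc, ← mul_pow, ENNReal.inv_mul_cancel two_ne_zero ENNReal.ofNat_ne_top, one_pow, mul_one]

theorem lintegral_two_pow_card_filter_mem_le {α : Type*} [MeasurableSpace α] (ρ : Measure α)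
    [IsProbabilityMeasure ρ] {D : ℕ → Set α} (hD : ∀ k, MeasurableSet (D k))
    [∀ k, DecidablePred (· ∈ D k)] (S : Finset ℕ) :
    ∫⁻ a, 2 ^ {k ∈ S | a ∈ D k}.card ∂ρ ≤ 1 + ∑ k ∈ S, 2 ^ k * ρ (D k) := by
  have hind (k : ℕ) : Measurable ((D k).indicator (1 : α → ℝ≥0∞)) := measurable_one.indicator (hD k)
  calc ∫⁻ a, 2 ^ {k ∈ S | a ∈ D k}.card ∂ρ
      ≤ ∫⁻ a, 1 + ∑ k ∈ S, 2 ^ k * (D k).indicator 1 a ∂ρ := by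
        gcongr with a
        simp only [indicator_apply, Pi.one_apply, mul_ite, mul_one, mul_zero, ← Finset.sum_filter]
        exact_mod_cast two_pow_card_le_one_add_sum_two_pow {k ∈ S | a ∈ D k}
    _ = 1 + ∑ k ∈ S, 2 ^ k * ρ (D k) := by
        rw [lintegral_add_left measurable_const,
          lintegral_finsetSum S fun k _ => (hind k).const_mul _]
        simp [lintegral_const_mul _ (hind _), lintegral_indicator_one (hD _)]

theorem fairCoins_measure_matching_eq_zero_le {L γ : Type*} [Countable L] [MeasurableSpace L]
    [DiscreteMeasurableSpace L] [MeasurableSpace γ] (ν : Measure γ) [IsProbabilityMeasure ν]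
    {κ : ℕ → γ → L} (hκ : ∀ k, Measurable (κ k)) (t : ℕ → Bool) (S : Finset ℕ) :
    fairCoins (ℕ × L) {ω | ν {c | ∀ k ∈ S, ω (k, κ k c) = t k} = 0} ≤
      ∑ k ∈ S, 2 ^ k * (ν.prod ν) {p | κ k p.1 = κ k p.2} := by
  classical
  let R : Set ((ℕ × L → Bool) × γ) := {q | ∀ k ∈ S, q.1 (k, κ k q.2) = t k}
  have hR : MeasurableSet R := by
    simp only [R, ofPred_forall]
    exact Finset.measurableSet_biInter S fun k _ =>
      measurableSet_eq_fun (measurable_apply_mk_apply (hκ k) k) measurable_const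
  have hagree (k : ℕ) : MeasurableSet {p : γ × γ | κ k p.1 = κ k p.2} :=
    measurableSet_eq_fun ((hκ k).comp measurable_fst) ((hκ k).comp measurable_snd)
  have hmean : ∫⁻ ω, ν (Prod.mk ω ⁻¹' R) ∂fairCoins (ℕ × L) = 2⁻¹ ^ S.card := by
    rw [← Measure.prod_apply hR, Measure.prod_apply_symm hR]
    exact (lintegral_congr fun c => fairCoins_setOf_forall_prodMk_eq S t (κ · c)).trans (by simp)
  refine measure_eq_zero_le_of_lintegral_sq_le (measurable_measure_prodMk_left hR)
    (by simp [hmean]) (by simp [hmean]) ?_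
  calc ∫⁻ ω, ν (Prod.mk ω ⁻¹' R) ^ 2 ∂fairCoins (ℕ × L)
      = ∫⁻ p, (2⁻¹ ^ S.card) ^ 2 * 2 ^ {k ∈ S | κ k p.1 = κ k p.2}.card ∂ν.prod ν := by
        rw [lintegral_measure_preimage_prodMk_sq hR]
        exact lintegral_congr fun p => fairCoins_setOf_forall_prodMk_eq_and S t (κ · p.1) (κ · p.2)
    _ = (2⁻¹ ^ S.card) ^ 2 * ∫⁻ p, 2 ^ {k ∈ S | κ k p.1 = κ k p.2}.card ∂ν.prod ν :=
        lintegral_const_mul' _ _ (by simp)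
    _ ≤ _ := by
        rw [hmean]
        gcongr
        exact lintegral_two_pow_card_filter_mem_le (ν.prod ν) hagree S

theorem ae_fairCoins_exists_forall_measure_matching_ne_zero {L γ : Type*} [Countable L]
    [MeasurableSpace L] [DiscreteMeasurableSpace L] [MeasurableSpace γ] (ν : Measure γ)
    [IsProbabilityMeasure ν] {κ : ℕ → γ → L} (hκ : ∀ k, Measurable (κ k)) (t : ℕ → Bool)
    (hsum : ∑' k, 2 ^ k * (ν.prod ν) {p | κ k p.1 = κ k p.2} ≠ ∞) :
    ∀ᵐ ω ∂fairCoins (ℕ × L), ∃ m, ∀ n, ν {c | ∀ k ∈ Finset.Ico m n, ω (k, κ k c) = t k} ≠ 0 := by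
  set w : ℕ → ℝ≥0∞ := fun k => 2 ^ k * (ν.prod ν) {p | κ k p.1 = κ k p.2}
  let bad (m n : ℕ) : Set (ℕ × L → Bool) :=
    {ω | ν {c | ∀ k ∈ Finset.Ico m n, ω (k, κ k c) = t k} = 0}
  have hmono (m : ℕ) : Monotone (bad m) := fun n n' hn ω hω =>
    measure_mono_null (fun c hc k hk => hc k (Finset.Ico_subset_Ico_right hn hk)) hω
  have hbad (m : ℕ) : fairCoins (ℕ × L) (⋃ n, bad m n) ≤ ∑' k, w (k + m) := by
    rw [(hmono m).measure_iUnion]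
    refine iSup_le fun n => (fairCoins_measure_matching_eq_zero_le ν hκ t _).trans ?_
    rw [Finset.sum_Ico_eq_sum_range]
    simp_rw [add_comm m]
    exact ENNReal.sum_le_tsum _
  have hinter : fairCoins (ℕ × L) (⋂ m, ⋃ n, bad m n) = 0 :=
    nonpos_iff_eq_zero.1 (ge_of_tendsto' (ENNReal.tendsto_sum_nat_add w hsum) fun m =>
      (measure_mono (iInter_subset _ m)).trans (hbad m))
  filter_upwards [measure_eq_zero_iff_ae_notMem.1 hinter] with ω hω
  simpa [bad] using hω

theorem exists_seq_ae_tsum_mul_ne_top {X : Type*} [MeasurableSpace X] {μ : Measure X}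
    {a : ℕ → X → ℝ≥0∞} (ha : ∀ n, Measurable (a n))
    (hlim : Tendsto (fun n => ∫⁻ x, a n x ∂μ) atTop (𝓝 0)) {w : ℕ → ℝ≥0∞} (hw : ∀ k, w k ≠ ∞) :
    ∃ n : ℕ → ℕ, ∀ᵐ x ∂μ, ∑' k, w k * a (n k) x ≠ ∞ := by
  obtain ⟨ε, hε, hεsum⟩ := ENNReal.exists_pos_sum_of_countable' one_ne_zero ℕ
  have hsmall (k : ℕ) : ∃ n, w k * ∫⁻ x, a n x ∂μ ≤ ε k := by
    have hlimk := ENNReal.Tendsto.const_mul hlim (.inr (hw k))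
    rw [mul_zero] at hlimk
    exact (hlimk.eventually_le_const (hε k)).exists
  choose n hn using hsmall
  refine ⟨n, ?_⟩
  have hint : ∫⁻ x, ∑' k, w k * a (n k) x ∂μ ≠ ∞ := by
    rw [lintegral_tsum fun k => ((ha _).const_mul _).aemeasurable]
    simp only [fun k => lintegral_const_mul (w k) (ha (n k)) (μ := μ)]
    exact ((ENNReal.tsum_le_tsum hn).trans_lt (hεsum.trans ENNReal.one_lt_top)).ne
  filter_upwards [ae_lt_top (.tsum fun k => (ha _).const_mul _) hint] with x hx using hx.ne

theorem exists_seq_ae_tsum_measure_res_eq_ne_top {X γ : Type*} [MeasurableSpace X]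
    [MeasurableSpace γ] {μ : Measure X} [IsFiniteMeasure μ] {ν : Measure γ} [IsFiniteMeasure ν]
    {ψ : X → γ → ℕ → Bool} (hψ : Measurable (uncurry ψ))
    (hinj : ∀ᵐ x ∂μ, (ν.prod ν) {p | ψ x p.1 = ψ x p.2} = 0) {w : ℕ → ℝ≥0∞} (hw : ∀ k, w k ≠ ∞) :
    ∃ n : ℕ → ℕ, ∀ᵐ x ∂μ,
      ∑' k, w k * (ν.prod ν) {p | PiNat.res (ψ x p.1) (n k) = PiNat.res (ψ x p.2) (n k)} ≠ ∞ := by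
  let D (n : ℕ) : Set (X × γ × γ) :=
    {q | PiNat.res (ψ q.1 q.2.1) n = PiNat.res (ψ q.1 q.2.2) n}
  have hD (n : ℕ) : MeasurableSet (D n) := by
    have hdigit (i : ℕ) : MeasurableSet {q : X × γ × γ | ψ q.1 q.2.1 i = ψ q.1 q.2.2 i} :=
      measurableSet_eq_fun
        ((measurable_pi_apply i).comp (hψ.comp (measurable_fst.prodMk measurable_snd.fst)))
        ((measurable_pi_apply i).comp (hψ.comp (measurable_fst.prodMk measurable_snd.snd)))
    have hD_eq : D n = ⋂ i, ⋂ _ : i < n, {q | ψ q.1 q.2.1 i = ψ q.1 q.2.2 i} := by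
      ext q
      simp [D, PiNat.res_eq_res]
    rw [hD_eq]
    exact .iInter fun i => .iInter fun _ => hdigit i
  have hanti : Antitone D := fun n n' hn q hq =>
    PiNat.res_eq_res.2 fun i hi => PiNat.res_eq_res.1 hq (hi.trans_le hn)
  have hnull : (μ.prod (ν.prod ν)) (⋂ n, D n) = 0 := by
    rw [Measure.measure_prod_null (.iInter hD)]
    filter_upwards [hinj] with x hx
    exact measure_mono_null (fun p hp => PiNat.res_injective (funext (mem_iInter.1 hp))) hx
  have hlim := tendsto_measure_iInter_atTop (fun n => (hD n).nullMeasurableSet) hanti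
    ⟨0, measure_ne_top (μ.prod (ν.prod ν)) _⟩
  simp only [hnull, comp_def, fun n => Measure.prod_apply (hD n) (μ := μ) (ν := ν.prod ν)] at hlim
  exact exists_seq_ae_tsum_mul_ne_top (fun n => measurable_measure_prodMk_left (hD n)) hlim hw

/-- The decoder driven by the coin tosses `ω`: its `k`-th output bit is the toss attached to the
pair formed by `k` and the first `n k` bits of the input. -/
def prefixDecoder (ω : ℕ × List Bool → Bool) (n : ℕ → ℕ) (y : ℕ → Bool) : ℕ → Bool :=
  fun k => ω (k, PiNat.res y (n k))

theorem continuous_prefixDecoder (ω : ℕ × List Bool → Bool) (n : ℕ → ℕ) :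
    Continuous (prefixDecoder ω n) :=
  continuous_pi fun k => continuous_discrete_rng.2 fun b => by
    have hpre : (fun y => prefixDecoder ω n y k) ⁻¹' {b} =
        ⋃ l ∈ {l | ω (k, l) = b}, {y | PiNat.res y (n k) = l} := by
      ext y
      simp [prefixDecoder]
    rw [hpre]
    exact isOpen_biUnion fun l _ => isOpen_setOf_res_eq (n k) l

theorem exists_eventually_eq_of_forall_nonempty {γ : Type*} [TopologicalSpace γ] [CompactSpace γ]
    {v : γ → ℕ → Bool} (hv : Continuous v) {t : ℕ → Bool} {m : ℕ}
    (h : ∀ n, {c | ∀ k ∈ Finset.Ico m n, v c k = t k}.Nonempty) : ∃ c, ∀ k ≥ m, v c k = t k := by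
  have hclosed (n : ℕ) : IsClosed {c | ∀ k ∈ Finset.Ico m n, v c k = t k} := by
    simp only [ofPred_forall]
    exact isClosed_biInter fun k _ => isClosed_eq (by fun_prop) continuous_const
  obtain ⟨c, hc⟩ := IsCompact.nonempty_iInter_of_sequence_nonempty_isCompact_isClosed
    (fun n => {c | ∀ k ∈ Finset.Ico m n, v c k = t k})
    (fun n c hc k hk => hc k (Finset.Ico_subset_Ico_right n.le_succ hk)) h
    (hclosed 0).isCompact hclosed
  exact ⟨c, fun k hk => mem_iInter.1 hc (k + 1) k (by simp [hk])⟩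

theorem measurable_res {α : Type*} [Countable α] [MeasurableSpace α] [MeasurableSingletonClass α]
    [MeasurableSpace (List α)] [DiscreteMeasurableSpace (List α)] (n : ℕ) :
    Measurable fun σ : ℕ → α => PiNat.res σ n := by
  induction n with
  | zero => exact measurable_const
  | succ n ih =>
    exact (measurable_of_countable (uncurry List.cons)).comp
      ((measurable_pi_apply (X := fun _ => α) n).prodMk ih)

theorem measurableSet_setOf_exists_forall_measure_matching_ne_zero {X γ L : Type*} [Countable L]
    [MeasurableSpace L] [DiscreteMeasurableSpace L] [MeasurableSpace X] [MeasurableSpace γ]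
    (ν : Measure γ) [SFinite ν] {κ : ℕ → X × γ → L} (hκ : ∀ k, Measurable (κ k))
    {e : X → ℕ → Bool} (he : Measurable e) :
    MeasurableSet {q : X × (ℕ × L → Bool) |
      ∃ m, ∀ n, ν {c | ∀ k ∈ Finset.Ico m n, q.2 (k, κ k (q.1, c)) = e q.1 k} ≠ 0} := by
  have hmatch (k : ℕ) : MeasurableSet
      {p : (X × (ℕ × L → Bool)) × γ | p.1.2 (k, κ k (p.1.1, p.2)) = e p.1.1 k} :=
    measurableSet_eq_fun
      ((measurable_apply_mk_apply (hκ k) k).comp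
        (measurable_fst.snd.prodMk (measurable_fst.fst.prodMk measurable_snd)))
      ((measurable_pi_apply k).comp (he.comp measurable_fst.fst))
  have hall (m n : ℕ) : MeasurableSet {p : (X × (ℕ × L → Bool)) × γ |
      ∀ k ∈ Finset.Ico m n, p.1.2 (k, κ k (p.1.1, p.2)) = e p.1.1 k} := by
    simp only [ofPred_forall]
    exact .iInter fun k => .iInter fun _ => hmatch k
  rw [ofPred_exists]
  refine .iUnion fun m => ?_
  rw [ofPred_forall]
  exact .iInter fun n =>
    measurable_measure_prodMk_left (hall m n) (measurableSet_singleton 0).compl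

theorem exists_prefixDecoder_ae_exists_eventually_eq {X γ : Type*} [MeasurableSpace X]
    [TopologicalSpace γ] [CompactSpace γ] [MeasurableSpace γ] {μ : Measure X} [IsFiniteMeasure μ]
    (ν : Measure γ) [IsProbabilityMeasure ν] {ψ : X → γ → ℕ → Bool} (hψ : Measurable (uncurry ψ))
    (hcont : ∀ x, Continuous (ψ x)) (hinj : ∀ᵐ x ∂μ, (ν.prod ν) {p | ψ x p.1 = ψ x p.2} = 0)
    {e : X → ℕ → Bool} (he : Measurable e) :
    ∃ ω n, ∀ᵐ x ∂μ, ∃ c, ∀ᶠ k in atTop, prefixDecoder ω n (ψ x c) k = e x k := by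
  obtain ⟨n, hn⟩ := exists_seq_ae_tsum_measure_res_eq_ne_top hψ hinj (w := fun k => 2 ^ k) (by simp)
  let : MeasurableSpace (List Bool) := ⊤
  let κ (k : ℕ) (q : X × γ) : List Bool := PiNat.res (ψ q.1 q.2) (n k)
  have hκ (k : ℕ) : Measurable (κ k) := (measurable_res (n k)).comp hψ
  have hgood := measurableSet_setOf_exists_forall_measure_matching_ne_zero ν hκ he
  have hae : ∀ᵐ x ∂μ, ∀ᵐ ω ∂fairCoins (ℕ × List Bool), ∃ m, ∀ K,
      ν {c | ∀ k ∈ Finset.Ico m K, ω (k, κ k (x, c)) = e x k} ≠ 0 := by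
    filter_upwards [hn] with x hx
    exact ae_fairCoins_exists_forall_measure_matching_ne_zero ν
      (fun k => (hκ k).comp measurable_prodMk_left) (e x) hx
  obtain ⟨ω, hω⟩ := ((Measure.ae_ae_comm hgood).1 hae).exists
  refine ⟨ω, n, ?_⟩
  filter_upwards [hω] with x ⟨m, hm⟩
  obtain ⟨c, hc⟩ := exists_eventually_eq_of_forall_nonempty
    ((continuous_prefixDecoder ω n).comp (hcont x)) (t := e x)
    fun K => nonempty_of_measure_ne_zero (hm K)
  exact ⟨c, eventually_atTop.2 ⟨m, hc⟩⟩

theorem exists_measurable_eventually_eq_injective (X : Type*) [MeasurableSpace X]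
    [MeasurableSpace.CountablyGenerated X] [MeasurableSpace.SeparatesPoints X] :
    ∃ e : X → ℕ → Bool, Measurable e ∧ ∀ x x', e x =ᶠ[atTop] e x' → x = x' := by
  -- Every binary digit of `x` is repeated infinitely often.
  refine ⟨fun x k => MeasurableSpace.mapNatBool X x k.unpair.1,
    measurable_pi_lambda _ fun k =>
      (measurable_pi_apply _).comp (MeasurableSpace.measurable_mapNatBool X), fun x x' h => ?_⟩
  obtain ⟨K, hK⟩ := eventually_atTop.1 h
  refine MeasurableSpace.injective_mapNatBool X (funext fun i => ?_)
  simpa using hK (Nat.pair i K) (Nat.right_le_pair i K)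

theorem exists_polishSpace_continuous_injective (Y : Type*) [MeasurableSpace Y]
    [StandardBorelSpace Y] :
    ∃ _ : TopologicalSpace Y, PolishSpace Y ∧ BorelSpace Y ∧
      ∃ ι : Y → ℕ → Bool, Continuous ι ∧ Injective ι := by
  let := upgradeStandardBorel Y
  obtain ⟨τ, hτ, hcont, hpolish⟩ :=
    (MeasurableSpace.measurable_mapNatBool Y).exists_continuous
  have hborel := borel_eq_borel_of_le hpolish (upgradeStandardBorel Y).toPolishSpace hτ
  exact ⟨τ, hpolish, ⟨BorelSpace.measurable_eq.trans hborel.symm⟩, _, hcont,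
    MeasurableSpace.injective_mapNatBool Y⟩

theorem exists_measurable_injOn_of_analyticSet {X Y : Type*} [TopologicalSpace X] [PolishSpace X]
    [MeasurableSpace X] [BorelSpace X] [TopologicalSpace Y] [PolishSpace Y] [MeasurableSpace Y]
    [BorelSpace Y] {ι : Y → ℕ → Bool} (hι : Continuous ι) (hι_inj : Injective ι)
    {μ : Measure X} [IsFiniteMeasure μ] [NeZero μ] {A : Set (X × Y)}
    (hA : AnalyticSet A) (hfib : ∀ᵐ x ∂μ, ¬{y | (x, y) ∈ A}.Countable) :
    ∃ f : X → Y, Measurable f ∧ ∃ S ∈ ae μ, InjOn f S ∧ ∀ x ∈ S, (x, f x) ∈ A := by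
  obtain ⟨e, he, he_inj⟩ := exists_measurable_eventually_eq_injective X
  obtain ⟨ψ, hψ, hψ_cont, hψA⟩ := exists_measurable_family_nat_bool_maps hA hfib (fairCoins ℕ)
  obtain ⟨ω, n, hωn⟩ := exists_prefixDecoder_ae_exists_eventually_eq (fairCoins ℕ)
    (ψ := fun x c => ι (ψ x c)) (hι.measurable.comp hψ) (fun x => hι.comp (hψ_cont x))
    (by simpa only [hι_inj.eq_iff] using hψA.mono fun x => And.right) he
  let v (y : Y) : ℕ → Bool := prefixDecoder ω n (ι y)
  have hv : Measurable v := ((continuous_prefixDecoder ω n).comp hι).measurable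
  have hP : MeasurableSet {q : X × (ℕ → Bool) | v (ψ q.1 q.2) =ᶠ[atTop] e q.1} := by
    simp only [EventuallyEq, eventually_atTop, ofPred_exists, ofPred_forall]
    exact .iUnion fun m => .iInter fun k => .iInter fun _ =>
      measurableSet_eq_fun ((measurable_pi_apply k).comp (hv.comp hψ))
        ((measurable_pi_apply k).comp (he.comp measurable_fst))
  obtain ⟨c, hc, hcP⟩ := exists_measurable_ae_mem hP hωn
  refine ⟨fun x => ψ x (c x), hψ.comp (measurable_id.prodMk hc), _, hψA.and hcP, ?_,
    fun x hx => hx.1.1 (c x)⟩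
  intro x hx x' hx' (hxx' : ψ x (c x) = ψ x' (c x'))
  have hcode : v (ψ x (c x)) =ᶠ[atTop] e x' := by rw [hxx']; exact hx'.2
  exact he_inj x x' (hx.2.symm.trans hcode)

theorem IsAnalyticS.analyticSet {W : Type*} [TopologicalSpace W] [T2Space W]
    [SecondCountableTopology W] [MeasurableSpace W] [OpensMeasurableSpace W] {A : Set W}
    (hA : IsAnalyticS A) : AnalyticSet A := by
  obtain ⟨Z, _, _, B, f, hB, hf, rfl⟩ := hA
  exact hB.analyticSet_image hf

theorem statement1_general {X Y : Type*} [MeasurableSpace X] [StandardBorelSpace X]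
    [MeasurableSpace Y] [StandardBorelSpace Y] (μ : Measure X) [SFinite μ]
    (A : Set (X × Y)) (hA : IsAnalyticS A) (hfib : ∀ᵐ x ∂μ, ¬{y : Y | (x, y) ∈ A}.Countable) :
    ∃ X' : Set X, MeasurableSet X' ∧ μ X'ᶜ = 0 ∧
      ∃ f : X' → Y, Measurable f ∧ Injective f ∧ ∀ x : X', ((x : X), f x) ∈ A := by
  obtain rfl | hμ := eq_zero_or_neZero μ
  · exact ⟨∅, .empty, rfl, fun x => x.2.elim, measurable_of_empty _,
      injective_of_subsingleton _, fun x => x.2.elim⟩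
  let := upgradeStandardBorel X
  obtain ⟨_, _, _, ι, hι, hι_inj⟩ := exists_polishSpace_continuous_injective Y
  have : NeZero μ.toFinite := ⟨by simpa using hμ.ne⟩
  obtain ⟨f, hf, S, hS, hinj, hfA⟩ := exists_measurable_injOn_of_analyticSet hι hι_inj
    (μ := μ.toFinite) hA.analyticSet (by rwa [ae_toFinite])
  rw [ae_toFinite] at hS
  obtain ⟨X', hμX', hX', hX'S⟩ := IsMeasurablyGenerated.exists_measurable_subset hS
  exact ⟨X', hX', hμX', X'.domRestrict f, hf.comp measurable_subtype_coe,
    (hinj.mono hX'S).injective, fun x => hfA x (hX'S x.2)⟩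

/-- Corollary 2.2: measurable injective selection from an analytic set
with uncountable fibers, on a conull Borel set. -/
theorem statement1 {X Y : Type} [MeasurableSpace X] [StandardBorelSpace X]
    [MeasurableSpace Y] [StandardBorelSpace Y]
    (μ : Measure X) [IsProbabilityMeasure μ]
    (A : Set (X × Y)) (hA : IsAnalyticS A)
    (hfib : ∀ x : X, ¬ {y : Y | (x, y) ∈ A}.Countable) :
    ∃ X' : Set X, MeasurableSet X' ∧ μ X'ᶜ = 0 ∧
      ∃ f : X' → Y, Measurable f ∧ Function.Injective f ∧
        ∀ x : X', ((x : X), f x) ∈ A :=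
  statement1_general μ A hA (.of_forall hfib)
end

section
/- Let X be a standard Borel space, let G be a countable discrete group acting on X by Borel automorphisms, let Σ be a countably generated sub-σ-algebra of the Borel σ-algebra of X, and let A ⊆ X be Borel. If for every G-invariant ergodic Borel probability measure ν on X there exists B ∈ Σ with ν(A △ B) = 0, then for every G-invariant Borel probability measure μ on X there exists C in the σ-algebra generated by I_G ∪ Σ with μ(A △ C) = 0. -/
open MeasureTheory Set Function
open scoped ENNReal symmDiff

/-!
Let `κ y` be the conditional measures of `μ` over the invariant σ-algebra `I`. Almost every `κ y`
is invariant, because `μ` is, and ergodic, so the hypothesis applies to it and `A` agrees with a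
`Σ`-measurable set modulo `κ y`; a choice of such sets depending `I`-measurably on `y` is glued into
the required set.

As `I` need not be countably generated, ergodicity needs an argument that treats all invariant
sets at once. The `f` in `L²(μ)` that have, for almost every `y`, integral zero with respect to
`κ y` over every invariant set form a closed subspace. It contains every coboundary `f ∘ g - f`, so
its orthogonal complement consists of invariant functions, and these are constant modulo almost
every `κ y`. Hence invariant sets are independent of all sets, themselves included, under almost
every `κ y`.
-/

open Filter ProbabilityTheory
open scoped Topology InnerProductSpace

section Lemmas

theorem eq_of_norm_le_of_inner_sub_eq_zero {𝕜 E : Type*} [RCLike 𝕜] [NormedAddCommGroup E]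
    [InnerProductSpace 𝕜 E] {x y : E} (hnorm : ‖x‖ ≤ ‖y‖) (hinner : ⟪y, x - y⟫_𝕜 = 0) : x = y := by
  have pythagoras := norm_add_sq_eq_norm_sq_add_norm_sq_of_inner_eq_zero y (x - y) hinner
  rw [add_sub_cancel] at pythagoras
  rw [← sub_eq_zero, ← norm_eq_zero]
  nlinarith [norm_nonneg (x - y), norm_nonneg x]

theorem ae_iInf_eq_zero_of_tendsto_lintegral {α : Type*} [MeasurableSpace α] {μ : Measure α}
    {F : ℕ → α → ℝ≥0∞} (hF : ∀ n, Measurable (F n))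
    (hlim : Tendsto (fun n => ∫⁻ a, F n a ∂μ) atTop (𝓝 0)) : ∀ᵐ a ∂μ, ⨅ n, F n a = 0 := by
  refine (lintegral_eq_zero_iff (Measurable.iInf hF)).1 (le_antisymm ?_ zero_le)
  exact ge_of_tendsto' hlim fun n => lintegral_mono fun a => iInf_le _ n

theorem tendsto_lintegral_enorm_sub_of_tendsto_Lp {α E : Type*} [MeasurableSpace α]
    {μ : Measure α} [IsFiniteMeasure μ] [NormedAddCommGroup E] {p : ℝ≥0∞} [Fact (1 ≤ p)]
    {ι : Type*} {l : Filter ι} {u : ι → Lp E p μ} {f : Lp E p μ} (hu : Tendsto u l (𝓝 f)) :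
    Tendsto (fun i => ∫⁻ x, ‖u i x - f x‖ₑ ∂μ) l (𝓝 0) := by
  have hp : (1 : ℝ≥0∞) ≤ p := Fact.out
  set c : ℝ≥0∞ := μ univ ^ (1 / (1 : ℝ≥0∞).toReal - 1 / p.toReal)
  have hc : c ≠ ∞ := by
    refine ENNReal.rpow_ne_top_of_nonneg ?_ (measure_ne_top μ univ)
    rcases eq_or_ne p ∞ with rfl | hp_top
    · simp
    · have hp_toReal : 1 ≤ p.toReal := by simpa using ENNReal.toReal_mono hp_top hp
      simpa using inv_le_one_of_one_le₀ hp_toReal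
  have hlim : Tendsto (fun i => eLpNorm (u i - f : α → E) p μ * c) l (𝓝 0) := by
    simpa using ENNReal.Tendsto.mul_const ((Lp.tendsto_Lp_iff_tendsto_eLpNorm' u f).1 hu) (.inr hc)
  refine tendsto_of_tendsto_of_tendsto_of_le_of_le tendsto_const_nhds hlim (fun _ => zero_le)
    fun i => ?_
  have hmeas : AEStronglyMeasurable (u i - f : α → E) μ :=
    (Lp.aestronglyMeasurable (u i)).sub (Lp.aestronglyMeasurable f)
  simpa only [eLpNorm_one_eq_lintegral_enorm, Pi.sub_apply] using
    eLpNorm_le_eLpNorm_mul_rpow_measure_univ hp hmeas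

theorem measure_symmDiff_limsup_eq_zero {α : Type*} [MeasurableSpace α] {μ : Measure α} {A : Set α}
    {C : ℕ → Set α} (hsum : ∑' n, μ (A ∆ C n) ≠ ∞) : μ (A ∆ limsup C atTop) = 0 := by
  rw [measure_eq_zero_iff_ae_notMem]
  filter_upwards [ae_eventually_notMem hsum] with x hx
  have hiff : ∀ᶠ n in atTop, (x ∈ C n ↔ x ∈ A) := by
    filter_upwards [hx] with n hn
    rw [Set.mem_symmDiff] at hn
    tauto
  rw [Set.mem_symmDiff, mem_limsup_iff_frequently_mem, frequently_congr hiff, frequently_const]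
  tauto

theorem exists_measurable_nat_forall_mem {α : Type*} [MeasurableSpace α] {P : ℕ → Set α}
    (hP : ∀ n, MeasurableSet (P n)) :
    ∃ N : α → ℕ, Measurable N ∧ ∀ a n, a ∈ P n → a ∈ P (N a) := by
  classical
  have hex : ∀ a, ∃ n, a ∈ ⋃ k, P k → a ∈ P n := fun a => by
    by_cases ha : a ∈ ⋃ k, P k
    · exact (mem_iUnion.1 ha).imp fun _ hn _ => hn
    · exact ⟨0, fun h => absurd h ha⟩
  refine ⟨fun a => Nat.find (hex a), measurable_find hex fun n => ?_, fun a n ha =>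
    Nat.find_spec (hex a) (mem_iUnion.2 ⟨n, ha⟩)⟩
  simpa only [imp_iff_not_or] using! (MeasurableSet.iUnion hP).compl.union (hP n)

theorem measurable_diag_prod {α : Type*} {m mα : MeasurableSpace α} (hm : m ≤ mα) :
    @Measurable α (α × α) mα (m.prod mα) Function.diag :=
  (measurable_id'' hm).prodMk measurable_id

theorem exists_seq_isSetAlgebra_generateFrom (α : Type*) [mα : MeasurableSpace α]
    [MeasurableSpace.CountablyGenerated α] :
    ∃ E : ℕ → Set α, IsSetAlgebra (range E) ∧ mα = MeasurableSpace.generateFrom (range E) := by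
  let 𝒜 := generateSetAlgebra (MeasurableSpace.countableGeneratingSet α)
  have halg : IsSetAlgebra 𝒜 := isSetAlgebra_generateSetAlgebra
  have hcount : 𝒜.Countable :=
    countable_generateSetAlgebra MeasurableSpace.countable_countableGeneratingSet
  obtain ⟨E, hE⟩ := hcount.exists_eq_range ⟨∅, halg.empty_mem⟩
  refine ⟨E, hE ▸ halg, ?_⟩
  rw [← hE, generateFrom_generateSetAlgebra_eq,
    MeasurableSpace.generateFrom_countableGeneratingSet]

theorem exists_seq_measurableSet_forall_measure_symmDiff_lt (α : Type*) [mα : MeasurableSpace α]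
    [MeasurableSpace.CountablyGenerated α] :
    ∃ E : ℕ → Set α, (∀ n, MeasurableSet (E n)) ∧ ∀ (ν : Measure α) [IsFiniteMeasure ν] (B : Set α),
      MeasurableSet B → ∀ ε : ℝ≥0∞, 0 < ε → ∃ n, ν (B ∆ E n) < ε := by
  obtain ⟨E, halg, hgen⟩ := exists_seq_isSetAlgebra_generateFrom α
  refine ⟨E, fun n => hgen ▸ MeasurableSpace.measurableSet_generateFrom (mem_range_self n),
    fun ν _ B hB ε hε => ?_⟩
  obtain ⟨δ, -, hδ, hδε⟩ := ENNReal.lt_iff_exists_real_btwn.1 hε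
  have hdense := Measure.MeasureDense.of_generateFrom_isSetAlgebra_finite (μ := ν) halg hgen
  obtain ⟨-, ⟨n, rfl⟩, hn⟩ := hdense.approx B hB (measure_ne_top ν B) δ (ENNReal.ofReal_pos.1 hδ)
  exact ⟨n, hn.trans hδε⟩

end Lemmas

section CondExpKernel

variable {X : Type*} {m S : MeasurableSpace X} [mX : MeasurableSpace X] [StandardBorelSpace X]
  {μ : Measure X} [IsFiniteMeasure μ]

theorem ae_ae_condExpKernel_of_ae (hm : m ≤ mX) {p : X → Prop} (hp : ∀ᵐ x ∂μ, p x) :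
    ∀ᵐ y ∂μ, ∀ᵐ x ∂condExpKernel μ m y, p x :=
  ae_of_ae_trim hm (Measure.ae_ae_of_ae_comp (by rwa [condExpKernel_comp_trim hm]))

theorem compProd_trim_condExpKernel_prod (hm : m ≤ mX) {D B : Set X} (hD : MeasurableSet[m] D)
    (hB : MeasurableSet B) : (μ.trim hm ⊗ₘ condExpKernel μ m) (D ×ˢ B) = μ (D ∩ B) := by
  rw [compProd_trim_condExpKernel hm, Measure.map_apply (measurable_diag_prod hm) (hD.prod hB)]
  rfl

theorem lintegral_lintegral_condExpKernel (hm : m ≤ mX) {f : X × X → ℝ≥0∞}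
    (hf : Measurable[m.prod mX] f) :
    ∫⁻ y, ∫⁻ x, f (y, x) ∂condExpKernel μ m y ∂μ = ∫⁻ x, f (x, x) ∂μ := by
  have hinner : Measurable[m] fun y => ∫⁻ x, f (y, x) ∂condExpKernel μ m y :=
    @Measurable.lintegral_kernel_prod_right' X X m mX (condExpKernel μ m) _ f hf
  rw [← lintegral_trim hm hinner, ← Measure.lintegral_compProd hf, compProd_trim_condExpKernel hm,
    @lintegral_map X (X × X) mX (m.prod mX) μ f _ hf (measurable_diag_prod hm)]
  rfl

theorem ae_ae_condExpKernel_eq_of_measurable (hm : m ≤ mX) {β : Type*} [MeasurableSpace β]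
    [MeasurableEq β] {v : X → β} (hv : Measurable[m] v) :
    ∀ᵐ y ∂μ, ∀ᵐ x ∂condExpKernel μ m y, v x = v y := by
  have hset : MeasurableSet[m.prod mX] {p : X × X | v p.2 = v p.1} :=
    measurableSet_eq_fun (m := m.prod mX) ((hv.mono hm le_rfl).comp measurable_snd)
      (hv.comp measurable_fst)
  refine ae_of_ae_trim hm (Measure.ae_ae_of_ae_compProd (p := fun p => v p.2 = v p.1) ?_)
  rw [compProd_trim_condExpKernel hm, ae_iff, ← compl_ofPred,
    Measure.map_apply (measurable_diag_prod hm) (MeasurableSet.compl_iff.2 hset)]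
  simp

theorem ae_measurePreserving_condExpKernel (hm : m ≤ mX) {T : X → X} (hT : MeasurePreserving T μ μ)
    (hinv : ∀ D, MeasurableSet[m] D → T ⁻¹' D = D) :
    ∀ᵐ y ∂μ, MeasurePreserving T (condExpKernel μ m y) (condExpKernel μ m y) := by
  have hcompProd : μ.trim hm ⊗ₘ (condExpKernel μ m).map T = μ.trim hm ⊗ₘ condExpKernel μ m := by
    refine Measure.ext_prod fun {D B} hD hB => ?_
    rw [Measure.compProd_map hT.measurable, Measure.map_apply (measurable_id.prodMap hT.measurable)
      (hD.prod hB)]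
    change (μ.trim hm ⊗ₘ condExpKernel μ m) (D ×ˢ (T ⁻¹' B)) = _
    rw [compProd_trim_condExpKernel_prod hm hD (hT.measurable hB),
      compProd_trim_condExpKernel_prod hm hD hB,
      ← hT.measure_preimage ((hm D hD).inter hB).nullMeasurableSet, preimage_inter, hinv D hD]
  filter_upwards [ae_of_ae_trim hm (Kernel.ae_eq_of_compProd_eq hcompProd)] with y hy
  exact ⟨hT.measurable, by rwa [Kernel.map_apply _ hT.measurable] at hy⟩

/-- The functions in `L²(μ)` that integrate to zero over every `m`-measurable set with respect to
almost every conditional measure of `μ` over `m`. The exceptional null set may depend on the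
function but not on the `m`-measurable set, even if `m` is not countably generated. -/
def fiberwiseCentered (μ : Measure X) [IsFiniteMeasure μ] (hm : m ≤ mX) :
    Submodule ℝ (Lp ℝ 2 μ) where
  carrier := {f | ∀ᵐ y ∂μ, ∀ D, MeasurableSet[m] D → ∫ x in D, f x ∂condExpKernel μ m y = 0}
  zero_mem' := by
    filter_upwards [ae_ae_condExpKernel_of_ae hm (Lp.coeFn_zero ℝ 2 μ)] with y hy D _
    simpa using integral_congr_ae (ae_restrict_of_ae (s := D) hy)
  add_mem' {f g} hf hg := by
    filter_upwards [hf, hg, ae_ae_condExpKernel_of_ae hm (Lp.coeFn_add f g),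
      ((Lp.memLp f).integrable one_le_two).condExpKernel_ae,
      ((Lp.memLp g).integrable one_le_two).condExpKernel_ae] with y hfy hgy hadd hfint hgint D hD
    rw [integral_congr_ae (ae_restrict_of_ae hadd)]
    simp only [Pi.add_apply]
    rw [integral_add hfint.integrableOn hgint.integrableOn, hfy D hD, hgy D hD, add_zero]
  smul_mem' c f hf := by
    filter_upwards [hf, ae_ae_condExpKernel_of_ae hm (Lp.coeFn_smul c f)] with y hfy hsmul D hD
    rw [integral_congr_ae (ae_restrict_of_ae hsmul)]
    simp only [Pi.smul_apply]
    rw [integral_smul, hfy D hD, smul_zero]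

theorem mem_fiberwiseCentered {hm : m ≤ mX} {f : Lp ℝ 2 μ} :
    f ∈ fiberwiseCentered μ hm ↔
      ∀ᵐ y ∂μ, ∀ D, MeasurableSet[m] D → ∫ x in D, f x ∂condExpKernel μ m y = 0 :=
  Iff.rfl

theorem isClosed_fiberwiseCentered (hm : m ≤ mX) :
    IsClosed (fiberwiseCentered μ hm : Set (Lp ℝ 2 μ)) := by
  refine IsSeqClosed.isClosed fun u f hu hlim => ?_
  have hint (h : Lp ℝ 2 μ) : ∀ᵐ y ∂μ, Integrable h (condExpKernel μ m y) :=
    ((Lp.memLp h).integrable one_le_two).condExpKernel_ae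
  have hmeas (n : ℕ) : Measurable fun x => ‖u n x - f x‖ₑ :=
    ((Lp.stronglyMeasurable (u n)).measurable.sub (Lp.stronglyMeasurable f).measurable).enorm
  let dist₁ (n : ℕ) (y : X) : ℝ≥0∞ := ∫⁻ x, ‖u n x - f x‖ₑ ∂condExpKernel μ m y
  have hdist : ∀ᵐ y ∂μ, ⨅ n, dist₁ n y = 0 := by
    refine ae_iInf_eq_zero_of_tendsto_lintegral
      (fun n => ((hmeas n).lintegral_kernel (κ := condExpKernel μ m)).mono hm le_rfl) ?_
    convert tendsto_lintegral_enorm_sub_of_tendsto_Lp hlim using 2 with n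
    exact lintegral_lintegral_condExpKernel hm ((hmeas n).comp measurable_snd)
  filter_upwards [ae_all_iff.2 hu, hdist, hint f, ae_all_iff.2 fun n => hint (u n)]
    with y huy hy hf hun D hD
  have hle (n : ℕ) : ‖∫ x in D, f x ∂condExpKernel μ m y‖ₑ ≤ dist₁ n y := by
    calc ‖∫ x in D, f x ∂condExpKernel μ m y‖ₑ
        = ‖∫ x in D, (u n x - f x) ∂condExpKernel μ m y‖ₑ := by
          rw [integral_sub (hun n).integrableOn hf.integrableOn, huy n D hD, zero_sub, enorm_neg]
      _ ≤ ∫⁻ x in D, ‖u n x - f x‖ₑ ∂condExpKernel μ m y := enorm_integral_le_lintegral_enorm _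
      _ ≤ dist₁ n y := setLIntegral_le_lintegral _ _
  simpa using (le_iInf hle).trans_eq hy

theorem exists_measurableSet_sup_measure_symmDiff_le (hm : m ≤ mX) (hS : S ≤ mX) {A : Set X}
    (hA : MeasurableSet A) {E : ℕ → Set X} (hE : ∀ n, MeasurableSet[S] (E n)) {ε : ℝ≥0∞}
    (hε : ∀ᵐ y ∂μ, ∃ n, condExpKernel μ m y (A ∆ E n) < ε) :
    ∃ C, MeasurableSet[m ⊔ S] C ∧ μ (A ∆ C) ≤ ε * μ univ := by
  have hAE (n : ℕ) : MeasurableSet (A ∆ E n) := hA.symmDiff (hS _ (hE n))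
  obtain ⟨N, hN, hNmem⟩ := @exists_measurable_nat_forall_mem X m
    (fun n => {y | condExpKernel μ m y (A ∆ E n) < ε})
    fun n => measurable_condExpKernel (hAE n) measurableSet_Iio
  let T : Set (X × X) := {p | p.2 ∈ A ∆ E (N p.1)}
  have hT : MeasurableSet[m.prod mX] T := by
    have hT_eq : T = ⋃ n, (N ⁻¹' {n}) ×ˢ (A ∆ E n) := by ext ⟨y, x⟩; simp [T]
    rw [hT_eq]
    exact @MeasurableSet.iUnion _ _ (m.prod mX) _ _ fun n =>
      @MeasurableSet.prod _ _ m mX _ _ (hN (measurableSet_singleton n)) (hAE n)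
  have hT_indicator : Measurable[m.prod mX] (T.indicator 1 : X × X → ℝ≥0∞) := by
    refine Measurable.indicator ?_ hT
    exact measurable_const
  refine ⟨{x | x ∈ E (N x)}, ?_, ?_⟩
  · have hC_eq : {x | x ∈ E (N x)} = ⋃ n, N ⁻¹' {n} ∩ E n := by ext x; simp
    rw [hC_eq]
    exact @MeasurableSet.iUnion _ _ (m ⊔ S) _ _ fun n => @MeasurableSet.inter _ (m ⊔ S) _ _
      (le_sup_left (b := S) _ (hN (measurableSet_singleton n))) (le_sup_right (a := m) _ (hE n))
  · calc μ (A ∆ {x | x ∈ E (N x)})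
        = ∫⁻ x, T.indicator 1 (x, x) ∂μ :=
          (lintegral_indicator_one (measurable_diag_prod hm hT)).symm
      _ = ∫⁻ y, ∫⁻ x, T.indicator 1 (y, x) ∂condExpKernel μ m y ∂μ :=
          (lintegral_lintegral_condExpKernel hm hT_indicator).symm
      _ = ∫⁻ y, condExpKernel μ m y (A ∆ E (N y)) ∂μ :=
          lintegral_congr fun y => lintegral_indicator_one (hAE (N y))
      _ ≤ ∫⁻ _, ε ∂μ := lintegral_mono_ae (hε.mono fun y ⟨n, hn⟩ => (hNmem y n hn).le)
      _ = ε * μ univ := lintegral_const ε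

theorem exists_measurableSet_sup_measure_symmDiff_eq_zero (hm : m ≤ mX) (hS : S ≤ mX)
    [@MeasurableSpace.CountablyGenerated X S] {A : Set X} (hA : MeasurableSet A)
    (h : ∀ᵐ y ∂μ, ∃ B, MeasurableSet[S] B ∧ condExpKernel μ m y (A ∆ B) = 0) :
    ∃ C, MeasurableSet[m ⊔ S] C ∧ μ (A ∆ C) = 0 := by
  obtain ⟨E, hE, hdense⟩ := @exists_seq_measurableSet_forall_measure_symmDiff_lt X S _
  have happrox (ε : ℝ≥0∞) (hε : 0 < ε) : ∀ᵐ y ∂μ, ∃ n, condExpKernel μ m y (A ∆ E n) < ε := by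
    filter_upwards [h] with y ⟨B, hB, hAB⟩
    obtain ⟨n, hn⟩ := hdense ((condExpKernel μ m y).trim hS) B hB ε hε
    rw [trim_measurableSet_eq hS (@MeasurableSet.symmDiff X S _ _ hB (hE n))] at hn
    refine ⟨n, lt_of_le_of_lt ?_ hn⟩
    simpa [hAB] using measure_symmDiff_le (μ := condExpKernel μ m y) A B (E n)
  obtain ⟨δ, hδ, hδsum⟩ := ENNReal.exists_pos_sum_of_countable' one_ne_zero ℕ
  choose C hC hCA using fun n =>
    exists_measurableSet_sup_measure_symmDiff_le hm hS hA hE (happrox (δ n) (hδ n))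
  refine ⟨limsup C atTop, @MeasurableSet.measurableSet_limsup X (m ⊔ S) C hC,
    measure_symmDiff_limsup_eq_zero ?_⟩
  refine ne_top_of_le_ne_top ?_ (ENNReal.tsum_le_tsum hCA)
  rw [ENNReal.tsum_mul_right]
  exact ENNReal.mul_ne_top (hδsum.trans ENNReal.one_lt_top).ne (measure_ne_top μ univ)

end CondExpKernel

section Invariant

variable {G X : Type*} [Group G] [MulAction G X] [mX : MeasurableSpace X]

theorem measurableSet_invSigma_iff {A : Set X} : MeasurableSet[invSigma G X] A ↔
    MeasurableSet A ∧ ∀ g : G, (fun x => g • x) ⁻¹' A = A := by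
  have hle : invSigma G X ≤ ⨅ g : G, MeasurableSpace.invariants (fun x : X => g • x) :=
    MeasurableSpace.generateFrom_le fun s hs =>
      MeasurableSpace.measurableSet_iInf.2 fun g => ⟨hs.1, hs.2 g⟩
  refine ⟨fun hA => ?_, fun hA => MeasurableSpace.measurableSet_generateFrom hA⟩
  have hinv := MeasurableSpace.measurableSet_iInf.1 (hle A hA)
  exact ⟨(hinv 1).1, fun g => (hinv g).2⟩

theorem invSigma_le : invSigma G X ≤ mX := fun _ hA => (measurableSet_invSigma_iff.1 hA).1

theorem isPmp_iff_smulInvariantMeasure [MeasurableConstSMul G X] {ν : Measure X} :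
    IsPmp G ν ↔ SMulInvariantMeasure G X ν :=
  ⟨fun h => ⟨fun g _ hs => (h g).measure_preimage hs.nullMeasurableSet⟩,
    fun _ g => measurePreserving_smul g ν⟩

theorem isErgodicInv_of_indep_invSigma {ν : Measure X} [IsFiniteMeasure ν]
    (h : Indep (invSigma G X) (invSigma G X) ν) : IsErgodicInv G ν := fun _ hD hinv =>
  measure_eq_zero_or_one_of_indep_self h (measurableSet_invSigma_iff.2 ⟨hD, hinv⟩)

theorem exists_measurable_invSigma_ae_eq [Countable G] [MeasurableConstSMul G X] {μ : Measure X}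
    {β : Type*} [Zero β] [MeasurableSpace β] [MeasurableEq β] {w : X → β} (hw : Measurable w)
    (hinv : ∀ g : G, (fun x => w (g • x)) =ᵐ[μ] w) :
    ∃ v : X → β, Measurable[invSigma G X] v ∧ v =ᵐ[μ] w := by
  let Y : Set X := {x | ∀ g : G, w (g • x) = w x}
  have hY : MeasurableSet Y :=
    measurableSet_setOfPred.2 <| Measurable.forall fun g =>
      measurableSet_setOfPred.1 (measurableSet_eq_fun (hw.comp (measurable_const_smul g)) hw)
  have hsmul (g : G) (x : X) (hx : x ∈ Y) : g • x ∈ Y := fun h => by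
    rw [← mul_smul, hx (h * g), hx g]
  have hsmul_iff (g : G) (x : X) : g • x ∈ Y ↔ x ∈ Y :=
    ⟨fun hx => by simpa using hsmul g⁻¹ _ hx, hsmul g x⟩
  have hv (g : G) (x : X) : Y.indicator w (g • x) = Y.indicator w x := by
    by_cases hx : x ∈ Y
    · rw [indicator_of_mem ((hsmul_iff g x).2 hx), indicator_of_mem hx, hx g]
    · rw [indicator_of_notMem (mt (hsmul_iff g x).1 hx), indicator_of_notMem hx]
  refine ⟨Y.indicator w, fun s hs => measurableSet_invSigma_iff.2 ⟨hw.indicator hY hs, fun g => ?_⟩,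
    ?_⟩
  · ext x
    simp only [mem_preimage, hv]
  · filter_upwards [ae_all_iff.2 hinv] with x hx using indicator_of_mem (show x ∈ Y from hx) w

end Invariant

section ErgodicDecomposition

variable {G X : Type*} [Group G] [Countable G] [MulAction G X] [mX : MeasurableSpace X]
  [StandardBorelSpace X] [MeasurableConstSMul G X] (μ : Measure X) [IsFiniteMeasure μ]
  [SMulInvariantMeasure G X μ]

variable (G) in
theorem ae_smulInvariantMeasure_condExpKernel :
    ∀ᵐ y ∂μ, SMulInvariantMeasure G X (condExpKernel μ (invSigma G X) y) := by
  have hpres (g : G) := ae_measurePreserving_condExpKernel invSigma_le (measurePreserving_smul g μ)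
    fun D hD => (measurableSet_invSigma_iff.1 hD).2 g
  exact (ae_all_iff.2 hpres).mono fun y hy => isPmp_iff_smulInvariantMeasure.1 hy

variable {μ} in
theorem smul_sub_mem_fiberwiseCentered (g : G) (f : Lp ℝ 2 μ) :
    DomMulAct.mk g • f - f ∈ fiberwiseCentered μ (invSigma_le (G := G)) := by
  have hm : invSigma G X ≤ mX := invSigma_le
  rw [mem_fiberwiseCentered]
  filter_upwards [ae_ae_condExpKernel_of_ae hm (Lp.coeFn_sub (DomMulAct.mk g • f) f),
    ae_ae_condExpKernel_of_ae hm (DomMulAct.smul_Lp_ae_eq (DomMulAct.mk g) f),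
    ((Lp.memLp f).integrable one_le_two).condExpKernel_ae,
    ae_smulInvariantMeasure_condExpKernel G μ] with y hsub hsmul hf _ D hD
  have hpres := measurePreserving_smul g (condExpKernel μ (invSigma G X) y)
  have hinv : ∫ x in D, f (g • x) ∂condExpKernel μ (invSigma G X) y =
      ∫ x in D, f x ∂condExpKernel μ (invSigma G X) y := by
    conv_lhs => rw [← (measurableSet_invSigma_iff.1 hD).2 g]
    exact hpres.setIntegral_preimage_emb (measurableEmbedding_const_smul g) f D
  have hcongr : (DomMulAct.mk g • f - f : Lp ℝ 2 μ) =ᵐ[condExpKernel μ (invSigma G X) y]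
      fun x => f (g • x) - f x := by
    filter_upwards [hsub, hsmul] with x hsubx hsmulx
    rw [hsubx, Pi.sub_apply, hsmulx]
    rfl
  have hfg : Integrable (fun x => f (g • x)) (condExpKernel μ (invSigma G X) y) :=
    hpres.integrable_comp_of_integrable hf
  rw [integral_congr_ae (ae_restrict_of_ae hcongr),
    integral_sub hfg.integrableOn hf.integrableOn, hinv, sub_self]

variable {μ} in
theorem smul_eq_of_mem_orthogonal_fiberwiseCentered {w : Lp ℝ 2 μ}
    (hw : w ∈ (fiberwiseCentered μ (invSigma_le (G := G)))ᗮ) (g : G) : DomMulAct.mk g • w = w :=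
  eq_of_norm_le_of_inner_sub_eq_zero (𝕜 := ℝ) (DomMulAct.norm_smul_Lp _ w).le
    (Submodule.inner_left_of_mem_orthogonal (smul_sub_mem_fiberwiseCentered g w) hw)

variable (G) {μ} in
theorem ae_setIntegral_condExpKernel_invSigma (f : Lp ℝ 2 μ) :
    ∀ᵐ y ∂μ, ∀ D, MeasurableSet[invSigma G X] D →
      ∫ x in D, f x ∂condExpKernel μ (invSigma G X) y =
        (condExpKernel μ (invSigma G X) y).real D *
          ∫ x, f x ∂condExpKernel μ (invSigma G X) y := by
  let N := fiberwiseCentered μ (invSigma_le (G := G))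
  have : CompleteSpace N := (isClosed_fiberwiseCentered invSigma_le).completeSpace_coe
  let p : Lp ℝ 2 μ := N.starProjection f
  have hinv (g : G) : (fun x => (f - p : Lp ℝ 2 μ) (g • x)) =ᵐ[μ] (f - p : Lp ℝ 2 μ) := by
    have hfix := smul_eq_of_mem_orthogonal_fiberwiseCentered
      (N.sub_starProjection_mem_orthogonal f) g
    have hae := DomMulAct.smul_Lp_ae_eq (DomMulAct.mk g) (f - p)
    rw [hfix] at hae
    exact hae.symm
  obtain ⟨v, hv, hvw⟩ :=
    exists_measurable_invSigma_ae_eq (Lp.stronglyMeasurable (f - p)).measurable hinv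
  filter_upwards [mem_fiberwiseCentered.1 (N.starProjection_apply_mem f),
    ae_ae_condExpKernel_eq_of_measurable (invSigma_le (G := G)) hv,
    ae_ae_condExpKernel_of_ae (invSigma_le (G := G)) (Lp.coeFn_sub f p),
    ae_ae_condExpKernel_of_ae (invSigma_le (G := G)) hvw,
    ((Lp.memLp p).integrable one_le_two).condExpKernel_ae] with y hp hconst hsub hvwy hpint
  have hf : f =ᵐ[condExpKernel μ (invSigma G X) y] fun x => p x + v y := by
    filter_upwards [hconst, hsub, hvwy] with x hconstx hsubx hvwx
    rw [← hconstx, hvwx, hsubx, Pi.sub_apply, add_sub_cancel]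
  have hset (D : Set X) (hD : MeasurableSet[invSigma G X] D) :
      ∫ x in D, f x ∂condExpKernel μ (invSigma G X) y =
        (condExpKernel μ (invSigma G X) y).real D * v y := by
    rw [integral_congr_ae (ae_restrict_of_ae hf),
      integral_add hpint.integrableOn (integrable_const _), hp D hD, setIntegral_const, zero_add,
      smul_eq_mul]
  have huniv : ∫ x, f x ∂condExpKernel μ (invSigma G X) y = v y := by
    simpa using hset univ MeasurableSet.univ
  intro D hD
  rw [hset D hD, huniv]

variable (G) in
theorem ae_indep_invSigma_condExpKernel :
    ∀ᵐ y ∂μ, Indep (invSigma G X) mX (condExpKernel μ (invSigma G X) y) := by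
  obtain ⟨E, halg, hgen⟩ := exists_seq_isSetAlgebra_generateFrom X
  have hE (n : ℕ) : MeasurableSet (E n) :=
    hgen ▸ MeasurableSpace.measurableSet_generateFrom (mem_range_self n)
  have hind (n : ℕ) :=
    ae_ae_condExpKernel_of_ae (invSigma_le (G := G)) (indicatorConstLp_coeFn (p := 2) (hs := hE n)
      (hμs := measure_ne_top μ (E n)) (c := (1 : ℝ)))
  filter_upwards [ae_all_iff.2 hind, ae_all_iff.2 fun n => ae_setIntegral_condExpKernel_invSigma G
    (indicatorConstLp 2 (hE n) (measure_ne_top μ (E n)) (1 : ℝ))] with y hindy hy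
  refine IndepSets.indep invSigma_le le_rfl
    (@MeasurableSpace.isPiSystem_measurableSet X (invSigma G X))
    (fun s hs t ht _ => halg.inter_mem hs ht)
    (@MeasurableSpace.generateFrom_measurableSet X (invSigma G X)).symm hgen ?_
  rw [IndepSets_iff]
  rintro D - hD ⟨n, rfl⟩
  have hmul := hy n D hD
  rw [integral_congr_ae (ae_restrict_of_ae (hindy n)), integral_congr_ae (hindy n),
    setIntegral_indicator (hE n), integral_indicator (hE n)] at hmul
  rw [← ENNReal.toReal_eq_toReal_iff' (measure_ne_top _ _)
    (ENNReal.mul_ne_top (measure_ne_top _ _) (measure_ne_top _ _)), ENNReal.toReal_mul]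
  simpa [Measure.real] using hmul

end ErgodicDecomposition

/-- from Lemma 3.4: if a Borel set agrees with a `Σ`-measurable set
modulo null sets for every invariant ergodic measure, then for every invariant measure it
agrees with a set measurable in the σ-algebra generated by `I_G ∪ Σ`. -/
theorem statement3 {G X : Type*} (S : MeasurableSpace X) [Group G] [Countable G]
    [mX : MeasurableSpace X] [StandardBorelSpace X] [MulAction G X]
    (hmeas : ∀ g : G, Measurable (fun x : X => g • x))
    (hS : S ≤ mX) (hScg : CountablyGen S)
    (A : Set X) (hA : MeasurableSet A)
    (herg : ∀ ν : Measure X, IsProbabilityMeasure ν → IsPmp G ν → IsErgodicInv G ν →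
      ∃ B, MeasurableSet[S] B ∧ ν (A ∆ B) = 0) :
    ∀ μ : Measure X, IsProbabilityMeasure μ → IsPmp G μ →
      ∃ C, MeasurableSet[invSigma G X ⊔ S] C ∧ μ (A ∆ C) = 0 := by
  intro μ _ hpmp
  have : MeasurableConstSMul G X := ⟨hmeas⟩
  have : SMulInvariantMeasure G X μ := isPmp_iff_smulInvariantMeasure.1 hpmp
  have : @MeasurableSpace.CountablyGenerated X S := @MeasurableSpace.CountablyGenerated.mk X S hScg
  refine exists_measurableSet_sup_measure_symmDiff_eq_zero invSigma_le hS hA ?_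
  filter_upwards [ae_smulInvariantMeasure_condExpKernel G μ, ae_indep_invSigma_condExpKernel G μ]
    with y hinv hindep
  exact herg _ inferInstance (isPmp_iff_smulInvariantMeasure.2 hinv)
    (isErgodicInv_of_indep_invSigma (indep_of_indep_of_le_right hindep invSigma_le))
end
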